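/- With the expected-codimension hypothesis, the germ (X,0) = (F⁻¹(S_r),0) admits a smoothing (a deformation whose generic fibers avoid S_{r-1}, i.e. the perturbed fiber maps have empty preimage of S_{r-1}) if and only if q < (n-r+1)(n-r+2)/2. -/

import Mathlib

open Filter Topology

/-- `S` is a complex submanifold of `E` of codimension `c`: near each of its points it
is cut out by a holomorphic submersion to `ℂᶜ`. -/
def IsSubmanifoldOfCodim (E : Type*) [NormedAddCommGroup E] [NormedSpace ℂ E]
    (S : Set E) (c : ℕ) : Prop :=
  ∀ x ∈ S, ∃ U : Set E, IsOpen U ∧ x ∈ U ∧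
    ∃ g : E → EuclideanSpace ℂ (Fin c), ContDiffOn ℂ ⊤ g U ∧
      (∀ y ∈ U, y ∈ S ↔ g y = 0) ∧ Function.Surjective (fderiv ℂ g x)

namespace Smoothing

/-- `S` is covered by countably many `C¹` images of `ℝᵈ`. -/
def Cov {P : Type*} [NormedAddCommGroup P] [NormedSpace ℝ P] (d : ℕ) (S : Set P) : Prop :=
  ∃ f : ℕ → (Fin d → ℝ) → P, (∀ i, ContDiff ℝ 1 (f i)) ∧ S ⊆ ⋃ i, Set.range (f i)

section Cov
variable {P : Type*} [NormedAddCommGroup P] [NormedSpace ℝ P]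
variable {Q : Type*} [NormedAddCommGroup Q] [NormedSpace ℝ Q]

lemma Cov.mono {d : ℕ} {S T : Set P} (h : Cov d T) (hST : S ⊆ T) : Cov d S := by
  obtain ⟨f, hf, h⟩ := h
  exact ⟨f, hf, hST.trans h⟩

lemma Cov.iUnion {d : ℕ} {ι : Type*} [Countable ι] {S : ι → Set P} (h : ∀ i, Cov d (S i)) :
    Cov d (⋃ i, S i) := by
  rcases isEmpty_or_nonempty ι with hι | hι
  · refine ⟨fun _ _ => 0, fun _ => contDiff_const, ?_⟩
    simp
  obtain ⟨e, he⟩ := exists_surjective_nat ι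
  choose f hf h using h
  refine ⟨fun k => f (e k.unpair.1) k.unpair.2, fun k => hf _ _, ?_⟩
  intro x hx
  obtain ⟨i, hi⟩ := Set.mem_iUnion.1 hx
  obtain ⟨j, hj⟩ := Set.mem_iUnion.1 (h i hi)
  obtain ⟨a, rfl⟩ := he i
  refine Set.mem_iUnion.2 ⟨Nat.pair a j, ?_⟩
  simpa using hj

lemma Cov.union {d : ℕ} {S T : Set P} (h : Cov d S) (h' : Cov d T) : Cov d (S ∪ T) := by
  rw [Set.union_eq_iUnion]
  exact Cov.iUnion (fun b => by cases b <;> assumption)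

lemma cov_range {d : ℕ} [FiniteDimensional ℝ Q] (f : Q → P) (hf : ContDiff ℝ 1 f)
    (hd : Module.finrank ℝ Q ≤ d) : Cov d (Set.range f) := by
  obtain ⟨g, hg⟩ : ∃ g : (Fin d → ℝ) →ₗ[ℝ] Q, Function.Surjective g := by
    have : Module.finrank ℝ Q ≤ Module.finrank ℝ (Fin d → ℝ) := by simpa using hd
    obtain ⟨i, hi⟩ := finrank_le_iff_exists_linearMap.1 this
    obtain ⟨g, hg⟩ := i.exists_leftInverse_of_injective (LinearMap.ker_eq_bot.2 hi)
    exact ⟨g, fun q => ⟨i q, LinearMap.congr_fun hg q⟩⟩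
  refine ⟨fun _ => f ∘ g, fun _ => hf.comp (LinearMap.toContinuousLinearMap g).contDiff, ?_⟩
  intro x ⟨q, hq⟩
  obtain ⟨y, rfl⟩ := hg q
  exact Set.mem_iUnion.2 ⟨0, y, hq⟩

lemma Cov.mono_dim {d d' : ℕ} {S : Set P} (h : Cov d S) (hd : d ≤ d') : Cov d' S := by
  obtain ⟨f, hf, h⟩ := h
  exact (Cov.iUnion fun i => cov_range (f i) (hf i) (by simpa using hd)).mono h

/-- image of `R × S` under a `C¹` map -/
lemma Cov.image {R : Type*} [NormedAddCommGroup R] [NormedSpace ℝ R] [FiniteDimensional ℝ R]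
    {d d' : ℕ} {S : Set P} (h : Cov d S) (F : R × P → Q) (hF : ContDiff ℝ 1 F)
    (hd : Module.finrank ℝ R + d ≤ d') : Cov d' (F '' {x | x.2 ∈ S}) := by
  obtain ⟨f, hf, h⟩ := h
  refine (Cov.iUnion fun i => cov_range (Q := R × (Fin d → ℝ))
    (fun x => F (x.1, f i x.2)) ?_ (by simpa using hd)).mono ?_
  · exact hF.comp (contDiff_fst.prodMk ((hf i).comp contDiff_snd))
  · rintro _ ⟨⟨r, p⟩, hp, rfl⟩
    obtain ⟨i, y, hy⟩ := Set.mem_iUnion.1 (h hp)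
    exact Set.mem_iUnion.2 ⟨i, (r, y), by simp only [hy]⟩

lemma Cov.dense_compl [FiniteDimensional ℝ P] {d : ℕ} {S : Set P} (h : Cov d S)
    (hd : d < Module.finrank ℝ P) : Dense Sᶜ := by
  obtain ⟨f, hf, h⟩ := h
  apply _root_.dense_compl_of_dimH_lt_finrank
  refine lt_of_le_of_lt (dimH_mono h) ?_
  rw [dimH_iUnion]
  refine lt_of_le_of_lt (b := (d : ENNReal)) (iSup_le fun i => ?_) (by exact_mod_cast hd)
  simpa using (hf i).dimH_range_le

end Cov
end Smoothing

namespace Smoothing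

/-- symmetric matrices, as functions on unordered pairs -/
abbrev V (n : ℕ) : Type := Sym2 (Fin n) → ℂ

/-- the symmetric matrix of an element of `V n` -/
def mat {n : ℕ} (v : V n) : Matrix (Fin n) (Fin n) ℂ := Matrix.of fun i j => v s(i, j)

/-- the element of `V n` of a (symmetric) matrix -/
noncomputable def vec {n : ℕ} (A : Matrix (Fin n) (Fin n) ℂ) : V n :=
  fun s => A s.out.1 s.out.2

@[simp] lemma mat_apply {n : ℕ} (v : V n) (i j : Fin n) : mat v i j = v s(i, j) := rfl

lemma mat_symm {n : ℕ} (v : V n) : (mat v).IsSymm := by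
  ext i j
  simp [Sym2.eq_swap]

lemma vec_apply {n : ℕ} {A : Matrix (Fin n) (Fin n) ℂ} (hA : A.IsSymm) (i j : Fin n) :
    vec A s(i, j) = A i j := by
  unfold vec
  have h : s((s(i, j) : Sym2 (Fin n)).out.1, (s(i, j) : Sym2 (Fin n)).out.2) = s(i, j) :=
    Quot.out_eq (s(i, j))
  rcases Sym2.eq_iff.1 h with ⟨h1, h2⟩ | ⟨h1, h2⟩
  · rw [h1, h2]
  · rw [h1, h2]
    exact hA.apply i j

lemma mat_vec {n : ℕ} {A : Matrix (Fin n) (Fin n) ℂ} (hA : A.IsSymm) : mat (vec A) = A := by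
  ext i j
  exact vec_apply hA i j

lemma mat_injective {n : ℕ} : Function.Injective (mat (n := n)) := by
  intro v w h
  ext s
  induction s using Sym2.inductionOn with
  | hf i j => exact congrFun (congrFun h i) j

lemma mat_zero {n : ℕ} : mat (0 : V n) = 0 := rfl

lemma isClosed_rank_le (n m : ℕ) : IsClosed {v : V n | (mat v).rank ≤ m} := by
  let T : V n → ((Fin n → ℂ) →L[ℂ] (Fin n → ℂ)) := fun v =>
    LinearMap.toContinuousLinearMap (Matrix.toLin' (mat v))
  have hT : Continuous T := by
    let T' : V n →ₗ[ℂ] ((Fin n → ℂ) →L[ℂ] (Fin n → ℂ)) :=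
      { toFun := T
        map_add' := fun v w => by
          ext x i
          simp [T, Matrix.toLin'_apply, Matrix.mulVec, dotProduct, add_mul, Finset.sum_add_distrib]
        map_smul' := fun v w => by
          ext x i
          simp [T, Matrix.toLin'_apply, Matrix.mulVec, dotProduct, Finset.mul_sum, mul_assoc] }
    exact T'.continuous_of_finiteDimensional
  have h := (_root_.isOpen_setOfPred_nat_le_rank (𝕜 := ℂ) (E := Fin n → ℂ) (F := Fin n → ℂ)
    (m + 1)).preimage hT
  rw [← isOpen_compl_iff]
  convert h using 1
  ext v
  have : (T v : (Fin n → ℂ) →ₗ[ℂ] (Fin n → ℂ)).rank = ((mat v).rank : Cardinal) := by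
    simp only [T, LinearMap.rank, Matrix.rank, LinearMap.coe_toContinuousLinearMap]
    rw [Module.finrank_eq_rank]; rfl
  simp only [Set.mem_compl_iff, Set.mem_ofPred_eq, not_le, Set.mem_preimage, this]
  norm_cast

/-- chart space -/
abbrev C (m k : ℕ) : Type := V m × (Fin m → Fin k → ℂ)

variable {n m k : ℕ}

/-- the matrix `[1 X]`, up to a permutation of columns -/
def Pm (σ : Fin m ⊕ Fin k ≃ Fin n) (X : Fin m → Fin k → ℂ) : Matrix (Fin m) (Fin n) ℂ :=
  Matrix.of fun a j => Sum.elim (fun b => if a = b then (1 : ℂ) else 0) (fun c => X a c) (σ.symm j)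

/-- the chart of the symmetric matrices of rank at most `m` -/
noncomputable def Phi (σ : Fin m ⊕ Fin k ≃ Fin n) (c : C m k) : V n :=
  vec ((Pm σ c.2).transpose * mat c.1 * Pm σ c.2)

lemma Phi_symm (σ : Fin m ⊕ Fin k ≃ Fin n) (c : C m k) :
    ((Pm σ c.2).transpose * mat c.1 * Pm σ c.2).IsSymm := by
  unfold Matrix.IsSymm
  rw [Matrix.transpose_mul, Matrix.transpose_mul, Matrix.transpose_transpose,
    (mat_symm c.1).eq, Matrix.mul_assoc]

lemma mat_Phi (σ : Fin m ⊕ Fin k ≃ Fin n) (c : C m k) :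
    mat (Phi σ c) = (Pm σ c.2).transpose * mat c.1 * Pm σ c.2 := mat_vec (Phi_symm σ c)

lemma contDiff_Phi (σ : Fin m ⊕ Fin k ≃ Fin n) {i : WithTop ℕ∞} : ContDiff ℂ i (Phi σ) := by
  have hP : ∀ a j, ContDiff ℂ i (fun c : C m k => Pm σ c.2 a j) := by
    intro a j
    unfold Pm
    rcases h : σ.symm j with b | c
    · simp only [Matrix.of_apply, h, Sum.elim_inl]; exact contDiff_const
    · simp only [Matrix.of_apply, h, Sum.elim_inr]; fun_prop
  refine contDiff_pi.2 fun s => ?_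
  simp only [Phi, vec, Matrix.mul_apply, Matrix.transpose_apply, mat_apply]
  refine ContDiff.sum fun b _ => ContDiff.mul (ContDiff.sum fun a _ => ContDiff.mul (hP _ _) ?_) (hP _ _)
  fun_prop

lemma rank_Phi_le (σ : Fin m ⊕ Fin k ≃ Fin n) (c : C m k) :
    (mat (Phi σ c)).rank ≤ (mat c.1).rank := by
  rw [mat_Phi]
  exact (Matrix.rank_mul_le_left _ _).trans (Matrix.rank_mul_le_right _ _)

lemma rank_Phi_le' (σ : Fin m ⊕ Fin k ≃ Fin n) (c : C m k) : (mat (Phi σ c)).rank ≤ m :=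
  (rank_Phi_le σ c).trans (by simpa using (mat c.1).rank_le_card_width)

/-- upper left block -/
def blk (σ : Fin m ⊕ Fin k ≃ Fin n) (v : V n) : V m :=
  fun s => v (s.map fun a => σ (Sum.inl a))

lemma Phi_inl_inl (σ : Fin m ⊕ Fin k ≃ Fin n) (c : C m k) (a b : Fin m) :
    Phi σ c s(σ (.inl a), σ (.inl b)) = c.1 s(a, b) := by
  have : mat (Phi σ c) (σ (.inl a)) (σ (.inl b)) = c.1 s(a, b) := by
    rw [mat_Phi]
    simp [Matrix.mul_apply, Pm]
  exact this

lemma Phi_inl_inr (σ : Fin m ⊕ Fin k ≃ Fin n) (c : C m k) (a : Fin m) (b : Fin k) :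
    Phi σ c s(σ (.inl a), σ (.inr b)) = ∑ d, c.1 s(a, d) * c.2 d b := by
  have : mat (Phi σ c) (σ (.inl a)) (σ (.inr b)) = ∑ d, c.1 s(a, d) * c.2 d b := by
    rw [mat_Phi]
    simp [Matrix.mul_apply, Pm]
  exact this

lemma Phi_inr_inr (σ : Fin m ⊕ Fin k ≃ Fin n) (c : C m k) (a : Fin k) (b : Fin k) :
    Phi σ c s(σ (.inr a), σ (.inr b)) = ∑ d, (∑ e, c.2 e a * c.1 s(e, d)) * c.2 d b := by
  have : mat (Phi σ c) (σ (.inr a)) (σ (.inr b)) =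
      ∑ d, (∑ e, c.2 e a * c.1 s(e, d)) * c.2 d b := by
    rw [mat_Phi]
    simp only [Matrix.mul_apply, Pm, Matrix.transpose_apply, Matrix.of_apply, Equiv.symm_apply_apply,
      Sum.elim_inr, mat_apply]
  exact this

lemma eq_Phi (σ : Fin m ⊕ Fin k ≃ Fin n) (v : V n) (X : Fin m → Fin k → ℂ)
    (h : ∀ c j, v s(σ (.inr c), j) = ∑ a, X a c * v s(σ (.inl a), j)) :
    v = Phi σ (blk σ v, X) := by
  have h11 : ∀ a b, v s(σ (.inl a), σ (.inl b)) = Phi σ (blk σ v, X) s(σ (.inl a), σ (.inl b)) := by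
    intro a b
    rw [Phi_inl_inl]; simp [blk]
  have h12 : ∀ a b, v s(σ (.inl a), σ (.inr b)) = Phi σ (blk σ v, X) s(σ (.inl a), σ (.inr b)) := by
    intro a b
    rw [Phi_inl_inr, Sym2.eq_swap, h]
    refine Finset.sum_congr rfl fun d _ => ?_
    simp only [blk, Sym2.map_mk]
    rw [mul_comm, Sym2.eq_swap]
  apply mat_injective
  ext i j
  simp only [mat_apply]
  obtain ⟨i, rfl⟩ := σ.surjective i
  obtain ⟨j, rfl⟩ := σ.surjective j
  rcases i with a | a <;> rcases j with b | b
  · exact h11 a b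
  · exact h12 a b
  · rw [Sym2.eq_swap]; exact h12 b a
  · rw [h, Phi_inr_inr]
    simp_rw [h12, Phi_inl_inr, Finset.mul_sum, Finset.sum_mul]
    rw [Finset.sum_comm]
    refine Finset.sum_congr rfl fun d _ => Finset.sum_congr rfl fun e _ => ?_
    ring

lemma exists_X (σ : Fin m ⊕ Fin k ≃ Fin n) (v : V n)
    (h : ∀ i, (mat v).row i ∈ Submodule.span ℂ (Set.range fun a => (mat v).row (σ (.inl a)))) :
    ∃ X : Fin m → Fin k → ℂ, ∀ c j, v s(σ (.inr c), j) = ∑ a, X a c * v s(σ (.inl a), j) := by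
  have h' := fun c : Fin k => (Submodule.mem_span_range_iff_exists_fun ℂ).1 (h (σ (.inr c)))
  choose Y hY using h'
  refine ⟨fun a c => Y c a, fun c j => ?_⟩
  have := congrFun (hY c) j
  simp only [Finset.sum_apply, Pi.smul_apply, Matrix.row_apply, mat_apply, smul_eq_mul] at this
  exact this.symm

lemma exists_chart (hn : n = m + k) (v : V n) (hv : (mat v).rank ≤ m) :
    ∃ (σ : Fin m ⊕ Fin k ≃ Fin n) (c : C m k), v = Phi σ c := by
  obtain ⟨κ, a, ha, hspan, hli⟩ := exists_linearIndependent' ℂ (mat v).row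
  have : Finite κ := Finite.of_injective a ha
  cases nonempty_fintype κ
  have hcard : Fintype.card κ ≤ m := by
    rw [← finrank_span_eq_card hli, hspan, ← Matrix.rank_eq_finrank_span_row]
    exact hv
  obtain ⟨s, hs, hsc⟩ := Finset.exists_superset_card_eq (s := Finset.univ.image a) (n := m)
    (Finset.card_image_le.trans (by simpa using hcard)) (by simp [hn])
  let σ : Fin m ⊕ Fin k ≃ Fin n := finSumEquivOfFinset hsc (by
    rw [Finset.card_compl, hsc]; simp [hn])
  obtain ⟨X, hX⟩ := exists_X σ v (fun i => by
    have h1 : (mat v).row i ∈ Submodule.span ℂ (Set.range ((mat v).row ∘ a)) := by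
      rw [hspan]; exact Submodule.subset_span ⟨i, rfl⟩
    refine Submodule.span_mono ?_ h1
    rintro _ ⟨x, rfl⟩
    have hx : a x ∈ s := hs (by simp)
    have : a x ∈ Set.range (s.orderEmbOfFin hsc) := by simpa using hx
    obtain ⟨y, hy⟩ := this
    refine ⟨y, ?_⟩
    simp [σ, hy])
  exact ⟨σ, _, eq_Phi σ v X hX⟩

lemma eq_Phi_of_isUnit (σ : Fin m ⊕ Fin k ≃ Fin n) (v : V n) (hv : (mat v).rank ≤ m)
    (hB : IsUnit (mat (blk σ v)).det) :
    v = Phi σ (blk σ v, fun a c => ∑ b, (mat (blk σ v))⁻¹ a b * v s(σ (.inl b), σ (.inr c))) := by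
  have hli : LinearIndependent ℂ fun a : Fin m => (mat v).row (σ (.inl a)) := by
    have := Matrix.linearIndependent_rows_of_isUnit ((Matrix.isUnit_iff_isUnit_det _).2 hB)
    refine LinearIndependent.of_comp (LinearMap.funLeft ℂ ℂ (fun a => σ (.inl a))) ?_
    exact this
  have hspan : Submodule.span ℂ (Set.range fun a : Fin m => (mat v).row (σ (.inl a))) =
      Submodule.span ℂ (Set.range (mat v).row) := by
    apply Submodule.eq_of_le_of_finrank_le
    · apply Submodule.span_mono
      rintro _ ⟨a, rfl⟩
      exact ⟨_, rfl⟩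
    · rw [finrank_span_eq_card hli, ← Matrix.rank_eq_finrank_span_row]
      simpa using hv
  obtain ⟨X, hX⟩ := exists_X σ v (fun i => by rw [hspan]; exact Submodule.subset_span ⟨i, rfl⟩)
  have hX' : X = fun a c => ∑ b, (mat (blk σ v))⁻¹ a b * v s(σ (.inl b), σ (.inr c)) := by
    have h1 : (mat (blk σ v)) * Matrix.of X =
        Matrix.of fun b c => v s(σ (.inl b), σ (.inr c)) := by
      ext b c
      simp only [Matrix.mul_apply, Matrix.of_apply, mat_apply]
      rw [Sym2.eq_swap, hX]
      refine Finset.sum_congr rfl fun d _ => ?_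
      simp only [blk, Sym2.map_mk]
      rw [mul_comm, Sym2.eq_swap]
    have h2 : Matrix.of X = (mat (blk σ v))⁻¹ * Matrix.of fun b c => v s(σ (.inl b), σ (.inr c)) := by
      rw [← h1, Matrix.nonsing_inv_mul_cancel_left _ _ hB]
    ext a c
    have := congrFun (congrFun h2 a) c
    simpa [Matrix.mul_apply] using this
  rw [← hX']
  exact eq_Phi σ v X hX

lemma fderiv_Phi_injective (σ : Fin m ⊕ Fin k ≃ Fin n) (c : C m k) (hc : IsUnit (mat c.1).det)
    (d : C m k) (hd : fderiv ℂ (Phi σ) c d = 0) : d = 0 := by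
  have hdiff : HasFDerivAt (Phi σ) (fderiv ℂ (Phi σ) c) c :=
    ((contDiff_Phi σ (i := 1)).differentiable one_ne_zero c).hasFDerivAt
  have h1 : d.1 = 0 := by
    ext s
    induction s using Sym2.inductionOn with
    | hf a b =>
      have e1 := (hasFDerivAt_pi'.1 hdiff) s(σ (.inl a), σ (.inl b))
      simp_rw [Phi_inl_inl] at e1
      have e2 : HasFDerivAt (fun c : C m k => c.1 s(a, b))
        ((ContinuousLinearMap.proj s(a, b)).comp (ContinuousLinearMap.fst ℂ _ _)) c :=
        ContinuousLinearMap.hasFDerivAt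
          ((ContinuousLinearMap.proj (R := ℂ) (φ := fun _ : Sym2 (Fin m) => ℂ) s(a, b)).comp
            (ContinuousLinearMap.fst ℂ _ (Fin m → Fin k → ℂ)))
      have := congrArg (fun f => f d) (e1.unique e2)
      simp [hd] at this
      exact this.symm
  have h2 : mat c.1 * Matrix.of d.2 = 0 := by
    ext a b
    have e1 := (hasFDerivAt_pi'.1 hdiff) s(σ (.inl a), σ (.inr b))
    simp_rw [Phi_inl_inr] at e1
    have e2 : HasFDerivAt (fun c : C m k => ∑ d, c.1 s(a, d) * c.2 d b) _ c :=
      HasFDerivAt.fun_sum (u := Finset.univ) fun x _ => HasFDerivAt.mul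
        (ContinuousLinearMap.hasFDerivAt
          ((ContinuousLinearMap.proj (R := ℂ) (φ := fun _ : Sym2 (Fin m) => ℂ) s(a, x)).comp
            (ContinuousLinearMap.fst ℂ _ (Fin m → Fin k → ℂ))))
        (ContinuousLinearMap.hasFDerivAt
          ((ContinuousLinearMap.proj (R := ℂ) (φ := fun _ : Fin k => ℂ) b).comp
            ((ContinuousLinearMap.proj (R := ℂ) (φ := fun _ : Fin m => Fin k → ℂ) x).comp
            (ContinuousLinearMap.snd ℂ (V m) _))))
    have := congrArg (fun f => f d) (e1.unique e2)
    simp [hd, h1] at this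
    simp [Matrix.mul_apply, this]
  have h3 : Matrix.of d.2 = 0 := by
    rw [← Matrix.nonsing_inv_mul_cancel_left _ (Matrix.of d.2) hc, h2, Matrix.mul_zero]
  exact Prod.ext h1 h3

lemma choose_two_add (m k : ℕ) :
    (m + k + 1).choose 2 = (m + 1).choose 2 + m * k + (k + 1).choose 2 := by
  induction k with
  | zero => simp
  | succ k ih =>
    rw [show m + (k + 1) + 1 = (m + k + 1) + 1 by ring, Nat.choose_succ_succ' (m + k + 1) 1,
      Nat.choose_succ_succ' (k + 1) 1, ih]
    simp; ring

lemma finrank_C (hn : n = m + k) :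
    Module.finrank ℂ (C m k) + (k + 1).choose 2 = Module.finrank ℂ (V n) := by
  subst hn
  simp [Module.finrank_prod, Module.finrank_pi_fintype, Sym2.card, choose_two_add m k]

end Smoothing

namespace Smoothing

variable {n m k N : ℕ}

/-- affine perturbations -/
abbrev Par (N n : ℕ) : Type := V n × (Fin N → V n)

/-- value of an affine perturbation -/
noncomputable def ev (θ : Par N n) (p : Fin N → ℂ) : V n := θ.1 + ∑ i, p i • θ.2 i

/-- the columns of the derivative -/
noncomputable def cols (G : (Fin N → ℂ) → V n) (p : Fin N → ℂ) : Fin N → V n :=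
  fun i => fderiv ℂ G p (Pi.single i 1)

/-- nondegeneracy of a jet -/
def NonDeg (m k : ℕ) (M : V n) (L : Fin N → V n) : Prop :=
  ∃ (σ : Fin m ⊕ Fin k ≃ Fin n) (c : C m k), M = Phi σ c ∧ IsUnit (mat c.1).det ∧
    ∀ (e : Fin N → ℂ) (d : C m k), ∑ i, e i • L i = fderiv ℂ (Phi σ) c d → e = 0

lemma NonDeg.rank_le {M : V n} {L : Fin N → V n} (h : NonDeg m k M L) : (mat M).rank ≤ m := by
  obtain ⟨σ, c, rfl, -⟩ := h
  exact rank_Phi_le' σ c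

/-- parametrization of degenerate derivatives -/
noncomputable def degL (σ : Fin m ⊕ Fin k ≃ Fin n) (j : Fin N)
    (x : C m k × C m k × ({i // i ≠ j} → ℂ) × ({i // i ≠ j} → V n)) : Fin N → V n :=
  fun i => if h : i = j then fderiv ℂ (Phi σ) x.1 x.2.1 - ∑ i, x.2.2.1 i • x.2.2.2 i
    else x.2.2.2 ⟨i, h⟩

lemma contDiff_degL (σ : Fin m ⊕ Fin k ≃ Fin n) (j : Fin N) :
    ContDiff ℂ 1 (degL (n := n) σ j) := by
  refine contDiff_pi.2 fun i => ?_
  by_cases h : i = j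
  · simp only [degL, h, dite_true]
    refine ContDiff.sub ?_ ?_
    · exact ((contDiff_Phi σ (i := 2)).fderiv_right (m := 1) (by norm_num)).comp
        contDiff_fst |>.clm_apply (by fun_prop)
    · fun_prop
  · simp only [degL, h, dite_false]
    fun_prop

lemma mem_degL (σ : Fin m ⊕ Fin k ≃ Fin n) (c d : C m k) (L : Fin N → V n) (e : Fin N → ℂ)
    (he : e ≠ 0) (h : ∑ i, e i • L i = fderiv ℂ (Phi σ) c d) :
    ∃ j y, degL σ j (c, y) = L := by
  obtain ⟨j, hj⟩ : ∃ j, e j ≠ 0 := by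
    by_contra! hh
    exact he (funext hh)
  refine ⟨j, ((e j)⁻¹ • d, fun i => (e j)⁻¹ * e i, fun i => L i), ?_⟩
  ext1 i
  by_cases hi : i = j
  · simp only [degL, hi, dite_true, map_smul]
    rw [← h]
    have : ∑ i, e i • L i = e j • L j + ∑ i : {i // i ≠ j}, e i • L i := by
      classical
      rw [← Finset.add_sum_erase _ _ (Finset.mem_univ j)]
      congr 1
      refine Finset.sum_subtype _ (fun x => by simp) _
    rw [this, smul_add, smul_smul, inv_mul_cancel₀ hj, one_smul, Finset.smul_sum]
    simp_rw [smul_smul]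
    abel
  · simp only [degL, hi, dite_false]

lemma cov_hits (hn : n = m + k) :
    Cov (2 * Module.finrank ℂ (C m k)) {v : V n | (mat v).rank ≤ m} := by
  refine (Cov.iUnion fun σ : Fin m ⊕ Fin k ≃ Fin n => cov_range (P := V n) (Phi σ)
    ((contDiff_Phi σ).restrict_scalars ℝ) (le_of_eq (finrank_real_of_complex _))).mono ?_
  intro v hv
  obtain ⟨σ, c, rfl⟩ := exists_chart hn v hv
  exact Set.mem_iUnion.2 ⟨σ, c, rfl⟩

lemma finrank_V_pos (hn : n = m + k) (hN : N = (k + 1).choose 2) :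
    Module.finrank ℂ (C m k) + N = Module.finrank ℂ (V n) := by
  rw [hN]; exact finrank_C hn

lemma finrank_aux (j : Fin N) : Module.finrank ℂ ({i : Fin N // i ≠ j} → ℂ) + 1 = N ∧
    Module.finrank ℂ ({i : Fin N // i ≠ j} → V n) + Module.finrank ℂ (V n) =
      N * Module.finrank ℂ (V n) := by
  have hN : 1 ≤ N := by have := j.2; omega
  have hc : Fintype.card {i : Fin N // i ≠ j} = N - 1 := by
    rw [Fintype.card_subtype_compl]; simp
  rw [Module.finrank_pi, Module.finrank_pi_fintype, Finset.sum_const, Finset.card_univ, hc, smul_eq_mul]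
  refine ⟨by omega, ?_⟩
  obtain ⟨M, rfl⟩ : ∃ M, N = M + 1 := ⟨N - 1, by omega⟩
  simp; ring

lemma finrank_piV : Module.finrank ℂ (Fin N → V n) = N * Module.finrank ℂ (V n) := by
  rw [Module.finrank_pi_fintype ℂ]
  simp

lemma finrank_quad (j : Fin N) :
    Module.finrank ℂ (C m k × ({i : Fin N // i ≠ j} → ℂ) × ({i : Fin N // i ≠ j} → V n)) =
    Module.finrank ℂ (C m k) + (Module.finrank ℂ ({i : Fin N // i ≠ j} → ℂ) +
      Module.finrank ℂ ({i : Fin N // i ≠ j} → V n)) := by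
  rw [← Module.finrank_prod (M' := {i : Fin N // i ≠ j} → V n)]
  exact Module.finrank_prod

lemma finrank_quint (j : Fin N) :
    Module.finrank ℂ (C m k × C m k × ({i : Fin N // i ≠ j} → ℂ) × ({i : Fin N // i ≠ j} → V n)) =
    Module.finrank ℂ (C m k) + (Module.finrank ℂ (C m k) +
      (Module.finrank ℂ ({i : Fin N // i ≠ j} → ℂ) +
      Module.finrank ℂ ({i : Fin N // i ≠ j} → V n))) := by
  rw [← finrank_quad]
  exact Module.finrank_prod

lemma finrank_Par : Module.finrank ℂ (Par N n) =
    Module.finrank ℂ (V n) + N * Module.finrank ℂ (V n) := by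
  rw [Module.finrank_prod, finrank_piV]

lemma cov_degL_fixed (hn : n = m + k) (hN : N = (k + 1).choose 2)
    (σ : Fin m ⊕ Fin k ≃ Fin n) (c : C m k) :
    Dense {L : Fin N → V n | ∀ (e : Fin N → ℂ) (d : C m k),
      ∑ i, e i • L i = fderiv ℂ (Phi σ) c d → e = 0} := by
  have h1 := finrank_V_pos (N := N) hn hN
  rcases Nat.eq_zero_or_pos N with h0 | hpos
  · subst h0
    convert dense_univ
    ext L
    simp only [Set.mem_ofPred_eq, Set.mem_univ, iff_true]
    intro e _ _
    exact Subsingleton.elim _ _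
  have hcov : Cov (2 * (N * Module.finrank ℂ (V n)) - 2) (⋃ j : Fin N, Set.range fun y =>
      degL (n := n) (m := m) (k := k) σ j (c, y)) := by
    refine Cov.iUnion fun j => cov_range _ ?_ ?_
    · exact ((contDiff_degL σ j).comp (contDiff_const.prodMk contDiff_id)).restrict_scalars ℝ
    · rw [finrank_real_of_complex, finrank_quad]
      have := finrank_aux (n := n) j
      omega
  have hpos' : 0 < N * Module.finrank ℂ (V n) := by
    apply Nat.mul_pos hpos; omega
  refine (hcov.dense_compl ?_).mono ?_
  · rw [finrank_real_of_complex, finrank_piV]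
    omega
  · intro L hL e d h
    by_contra he
    obtain ⟨j, y, hy⟩ := mem_degL σ c d L e he h
    exact hL (Set.mem_iUnion.2 ⟨j, y, hy⟩)

lemma cov_bad (hn : n = m + k) (hN : N = (k + 1).choose 2) {d : ℕ}
    (hd : 2 * Module.finrank ℂ (Par N n) ≤ d + 2 * N + 2) :
    Cov d {x : Par N n | (mat x.1).rank ≤ m ∧ ¬ NonDeg m k x.1 x.2} := by
  have h1 := finrank_V_pos (N := N) hn hN
  rw [finrank_Par] at hd
  have hA : Cov d (⋃ σ : Fin m ⊕ Fin k ≃ Fin n, ⋃ j : Fin N, Set.range fun x =>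
      ((Phi σ x.1, degL σ j x) : Par N n)) := by
    refine Cov.iUnion fun σ => Cov.iUnion fun j => cov_range _ ?_ ?_
    · exact (((contDiff_Phi σ).comp contDiff_fst).prodMk (contDiff_degL σ j)).restrict_scalars ℝ
    · rw [finrank_real_of_complex, finrank_quint]
      have := finrank_aux (n := n) j
      omega
  have hB : Cov d {x : Par N n | (mat x.1).rank < m} := by
    rcases m with _ | m
    · exact hA.mono (by intro x hx; simp at hx)
    have hn' : n = m + (k + 1) := by omega
    have h2 := finrank_C hn'
    have h3 : (k + 1 + 1).choose 2 = (k + 1) + (k + 1).choose 2 := by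
      rw [Nat.choose_succ_succ' (k + 1) 1]; simp
    have := (cov_hits hn').image (R := Fin N → V n) (Q := Par N n)
      (fun x => (x.2, x.1)) (by fun_prop) (d' := d) (by
        rw [finrank_real_of_complex, finrank_piV]
        omega)
    refine this.mono ?_
    intro x hx
    exact ⟨(x.2, x.1), Nat.lt_succ_iff.1 hx, rfl⟩
  refine (hB.union hA).mono ?_
  rintro ⟨M, L⟩ ⟨hr, hnd⟩
  rcases hr.lt_or_eq with hlt | heq
  · exact Or.inl hlt
  right
  obtain ⟨σ, c, rfl⟩ := exists_chart hn M hr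
  have hu : IsUnit (mat c.1).det := by
    rw [← Matrix.isUnit_iff_isUnit_det]
    have h5 : (mat c.1).rank = m := by
      apply le_antisymm
      · simpa using (mat c.1).rank_le_card_width
      · simp only at heq
        exact heq.symm.le.trans (rank_Phi_le σ c)
    rw [← Matrix.linearIndependent_rows_iff_isUnit, linearIndependent_iff_card_eq_finrank_span,
      Set.finrank, ← Matrix.rank_eq_finrank_span_row, h5]
    simp
  have : ∃ (e : Fin N → ℂ) (d : C m k), ∑ i, e i • L i = fderiv ℂ (Phi σ) c d ∧ e ≠ 0 := by
    by_contra! hh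
    exact hnd ⟨σ, c, rfl, hu, hh⟩
  obtain ⟨e, d, h, he⟩ := this
  obtain ⟨j, y, hy⟩ := mem_degL σ c d L e he h
  exact Set.mem_iUnion.2 ⟨σ, Set.mem_iUnion.2 ⟨j, (c, y), by simp [hy]⟩⟩

lemma chart_continuousAt (σ : Fin m ⊕ Fin k ≃ Fin n) (v : V n)
    (hB : IsUnit (mat (blk σ v)).det) :
    ContinuousAt (fun v : V n => ((blk σ v, fun a c => ∑ b, (mat (blk σ v))⁻¹ a b *
      v s(σ (.inl b), σ (.inr c))) : C m k)) v := by
  have h1 : Continuous (fun v : V n => mat (blk σ v)) := by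
    refine continuous_matrix fun i j => ?_
    simp only [mat_apply, blk]
    fun_prop
  refine ContinuousAt.prodMk ?_ ?_
  · refine Continuous.continuousAt ?_
    unfold blk
    fun_prop
  · refine continuousAt_pi.2 fun a => continuousAt_pi.2 fun c => ?_
    refine tendsto_finsetSum _ fun b _ => ContinuousAt.mul (f := fun v : V n => (mat (blk σ v))⁻¹ a b) ?_ (continuous_apply _).continuousAt
    simp only [Matrix.inv_def, Ring.inverse_eq_inv', Matrix.smul_apply, smul_eq_mul]
    refine ContinuousAt.mul (ContinuousAt.inv₀ h1.matrix_det.continuousAt hB.ne_zero) ?_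
    exact ((continuous_id.matrix_elem a b).comp h1.matrix_adjugate).continuousAt

lemma isOpen_unit (σ : Fin m ⊕ Fin k ≃ Fin n) :
    IsOpen {v : V n | IsUnit (mat (blk σ v)).det} := by
  have h1 : Continuous (fun v : V n => mat (blk σ v)) := by
    refine continuous_matrix fun i j => ?_
    simp only [mat_apply, blk]
    fun_prop
  simp only [isUnit_iff_ne_zero]
  exact isOpen_ne_fun h1.matrix_det continuous_const

lemma blk_Phi (σ : Fin m ⊕ Fin k ≃ Fin n) (c : C m k) : blk σ (Phi σ c) = c.1 := by
  ext s
  induction s using Sym2.inductionOn with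
  | hf a b => simp [blk, Phi_inl_inl]

lemma chart_Phi (σ : Fin m ⊕ Fin k ≃ Fin n) (c : C m k) (hc : IsUnit (mat c.1).det) :
    ((blk σ (Phi σ c), fun a b => ∑ d, (mat (blk σ (Phi σ c)))⁻¹ a d *
      (Phi σ c) s(σ (.inl d), σ (.inr b))) : C m k) = c := by
  rw [blk_Phi]
  refine Prod.ext rfl ?_
  have : (mat c.1)⁻¹ * (mat c.1 * Matrix.of c.2) = Matrix.of c.2 :=
    Matrix.nonsing_inv_mul_cancel_left _ _ hc
  ext a b
  have := congrFun (congrFun this a) b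
  rw [Matrix.mul_apply] at this
  simp only [Phi_inl_inr]
  simpa [Matrix.mul_apply] using this

lemma sum_cols (G : (Fin N → ℂ) → V n) (p e : Fin N → ℂ) :
    ∑ i, e i • cols G p i = fderiv ℂ G p e := by
  conv_rhs => rw [← Finset.univ_sum_single e]
  rw [map_sum]
  refine Finset.sum_congr rfl fun i _ => ?_
  rw [cols, ← map_smul, ← Pi.single_smul, smul_eq_mul, mul_one]

/-- nondegenerate hits persist uniquely under perturbation -/
lemma persist (hn : n = m + k) (hN : N = (k + 1).choose 2)
    {Λ : Type*} [NormedAddCommGroup Λ] [NormedSpace ℂ Λ] [CompleteSpace Λ]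
    (G : Λ × (Fin N → ℂ) → V n) (hG : ContDiff ℂ 1 G) (l₀ : Λ) (p₀ : Fin N → ℂ)
    (hnd : NonDeg m k (G (l₀, p₀)) (cols (fun p => G (l₀, p)) p₀)) :
    ∃ ψ : Λ → (Fin N → ℂ), Tendsto ψ (𝓝 l₀) (𝓝 p₀) ∧
      (∀ᶠ l in 𝓝 l₀, (mat (G (l, ψ l))).rank ≤ m) ∧
      ∀ᶠ x in 𝓝 (l₀, p₀), (mat (G x)).rank ≤ m → x.2 = ψ x.1 := by
  obtain ⟨σ, c, hM, hu, hinj⟩ := hnd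
  let f : Λ × ((Fin N → ℂ) × C m k) → V n := fun x => G (x.1, x.2.1) - Phi σ x.2.2
  have hf : ContDiff ℂ 1 f := by
    refine ContDiff.sub (hG.comp (by fun_prop)) ((contDiff_Phi σ).comp (by fun_prop))
  let u : Λ × ((Fin N → ℂ) × C m k) := (l₀, (p₀, c))
  have hfu : f u = 0 := by simp [f, u, hM]
  have dfu : HasStrictFDerivAt f (fderiv ℂ f u) u := hf.contDiffAt.hasStrictFDerivAt one_ne_zero
  have hpart : ∀ e d, (fderiv ℂ f u ∘L .inr ℂ Λ ((Fin N → ℂ) × C m k)) (e, d) =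
      fderiv ℂ (fun p => G (l₀, p)) p₀ e - fderiv ℂ (Phi σ) c d := by
    intro e d
    have h1 : HasFDerivAt (fun y : (Fin N → ℂ) × C m k => f (l₀, y))
        (fderiv ℂ f u ∘L .inr ℂ Λ ((Fin N → ℂ) × C m k)) (p₀, c) :=
      dfu.hasFDerivAt.comp (p₀, c) (hasFDerivAt_prodMk_right l₀ (p₀, c))
    have hg1 : DifferentiableAt ℂ (fun p => G (l₀, p)) p₀ :=
      (hG.comp (contDiff_const.prodMk contDiff_id)).differentiable one_ne_zero p₀
    have hg2 : DifferentiableAt ℂ (Phi σ) c := (contDiff_Phi σ (i := 1)).differentiable one_ne_zero c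
    have h2 : HasFDerivAt (fun y : (Fin N → ℂ) × C m k => f (l₀, y))
        ((fderiv ℂ (fun p => G (l₀, p)) p₀).comp (ContinuousLinearMap.fst ℂ _ _) -
          (fderiv ℂ (Phi σ) c).comp (ContinuousLinearMap.snd ℂ _ _)) (p₀, c) := by
      have a1 : HasFDerivAt (fun y : (Fin N → ℂ) × C m k => G (l₀, y.1))
          ((fderiv ℂ (fun p => G (l₀, p)) p₀).comp (ContinuousLinearMap.fst ℂ _ _)) (p₀, c) :=
        HasFDerivAt.comp (g := fun p => G (l₀, p)) (p₀, c) hg1.hasFDerivAt hasFDerivAt_fst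
      have a2 : HasFDerivAt (fun y : (Fin N → ℂ) × C m k => Phi σ y.2)
          ((fderiv ℂ (Phi σ) c).comp (ContinuousLinearMap.snd ℂ _ _)) (p₀, c) :=
        HasFDerivAt.comp (g := Phi σ) (p₀, c) hg2.hasFDerivAt hasFDerivAt_snd
      exact a1.fun_sub a2
    rw [h1.unique h2]
    rfl
  have hinv : (fderiv ℂ f u ∘L .inr ℂ Λ ((Fin N → ℂ) × C m k)).IsInvertible := by
    have hi : Function.Injective
        ((fderiv ℂ f u ∘L .inr ℂ Λ ((Fin N → ℂ) × C m k))).toLinearMap := by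
      rw [injective_iff_map_eq_zero]
      rintro ⟨e, d⟩ h
      have h' : fderiv ℂ (fun p => G (l₀, p)) p₀ e = fderiv ℂ (Phi σ) c d := by
        rw [← sub_eq_zero, ← hpart]; exact h
      have he := hinj e d (by rw [sum_cols]; exact h')
      subst he
      have hd := fderiv_Phi_injective σ c hu d (by rw [← h']; simp)
      subst hd
      rfl
    have hdim : Module.finrank ℂ ((Fin N → ℂ) × C m k) = Module.finrank ℂ (V n) := by
      rw [Module.finrank_prod, ← finrank_V_pos (N := N) hn hN]
      simp; ring
    refine ⟨(LinearMap.linearEquivOfInjective _ hi hdim).toContinuousLinearEquiv, ?_⟩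
    exact ContinuousLinearMap.ext fun x => rfl
  let Ψ := dfu.implicitFunctionOfProdDomain hinv
  have hΨ : Tendsto Ψ (𝓝 l₀) (𝓝 (p₀, c)) := dfu.tendsto_implicitFunctionOfProdDomain hinv
  refine ⟨fun l => (Ψ l).1, ?_, ?_, ?_⟩
  · exact (continuous_fst.tendsto _).comp hΨ
  · filter_upwards [dfu.eventually_apply_implicitFunctionOfProdDomain hinv] with l hl
    rw [hfu] at hl
    have : G (l, (Ψ l).1) = Phi σ (Ψ l).2 := sub_eq_zero.1 hl
    rw [this]
    exact rank_Phi_le' σ _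
  · have hev := dfu.eventually_apply_eq_iff_implicitFunctionOfProdDomain hinv
    rw [hfu] at hev
    have hGc : ContinuousAt G (l₀, p₀) := hG.continuous.continuousAt
    have hblk : IsUnit (mat (blk σ (G (l₀, p₀)))).det := by rw [hM, blk_Phi]; exact hu
    have hch := (chart_continuousAt σ _ hblk).comp (f := G) hGc
    have ht : Tendsto (fun x : Λ × (Fin N → ℂ) => ((x.1, (x.2, ((blk σ (G x), fun a c =>
        ∑ b, (mat (blk σ (G x)))⁻¹ a b * (G x) s(σ (.inl b), σ (.inr c))) : C m k))) :
          Λ × ((Fin N → ℂ) × C m k))) (𝓝 (l₀, p₀)) (𝓝 u) := by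
      refine Tendsto.prodMk_nhds (continuous_fst.tendsto _) (Tendsto.prodMk_nhds (continuous_snd.tendsto _) ?_)
      have h3 : Tendsto _ _ _ := hch
      have h4 := chart_Phi σ c hu
      rw [← hM] at h4
      simp only [Function.comp_def] at h3
      rw [h4] at h3
      exact h3
    filter_upwards [ht.eventually hev, hGc.eventually ((isOpen_unit σ).mem_nhds hblk)] with x hx hx2 hr
    have h5 := eq_Phi_of_isUnit σ (G x) hr hx2
    have h6 := hx.1 (sub_eq_zero.2 h5)
    have := congrArg Prod.fst h6
    exact this.symm

end Smoothing

namespace Smoothing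

variable {n m k N : ℕ}

/-- points of `Ω` mapped into rank `≤ m` -/
def hits (m : ℕ) (G : (Fin N → ℂ) → V n) (Ω : Set (Fin N → ℂ)) : Set (Fin N → ℂ) :=
  {p | p ∈ Ω ∧ (mat (G p)).rank ≤ m}

/-- nondegenerate jet at `p` -/
def NDAt (m k : ℕ) (G : (Fin N → ℂ) → V n) (p : Fin N → ℂ) : Prop :=
  NonDeg m k (G p) (cols G p)

section count
variable {Λ : Type*} [NormedAddCommGroup Λ] [NormedSpace ℂ Λ] [CompleteSpace Λ]

lemma count_ge (hn : n = m + k) (hN : N = (k + 1).choose 2)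
    (G : Λ × (Fin N → ℂ) → V n) (hG : ContDiff ℂ 1 G) (l₀ : Λ) {Ω : Set (Fin N → ℂ)}
    (hΩ : IsOpen Ω) (s : Finset (Fin N → ℂ))
    (hs : ∀ p ∈ s, p ∈ Ω ∧ NDAt m k (fun p => G (l₀, p)) p) :
    ∀ᶠ l in 𝓝 l₀, (s.card : ℕ∞) ≤ (hits m (fun p => G (l, p)) Ω).encard := by
  have h := fun p : s => persist hn hN G hG l₀ p (hs p p.2).2
  choose ψ h1 h2 h3 using h
  have e1 : ∀ᶠ l in 𝓝 l₀, ∀ p : s, ψ p l ∈ Ω ∧ (mat (G (l, ψ p l))).rank ≤ m := by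
    refine eventually_all.2 fun p => ?_
    exact ((h1 p).eventually (hΩ.mem_nhds (hs p p.2).1)).and (h2 p)
  have e2 : ∀ᶠ l in 𝓝 l₀, ∀ p p' : s, p ≠ p' → ψ p l ≠ ψ p' l := by
    refine eventually_all.2 fun p => eventually_all.2 fun p' => ?_
    by_cases hpp : p = p'
    · simp [hpp]
    · have : (p : Fin N → ℂ) ≠ p' := fun h => hpp (Subtype.ext h)
      have hop : IsOpen {x : (Fin N → ℂ) × (Fin N → ℂ) | x.1 ≠ x.2} :=
        isOpen_ne_fun continuous_fst continuous_snd
      filter_upwards [((h1 p).prodMk_nhds (h1 p')).eventually (hop.mem_nhds this)] with l hl _ using hl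
  filter_upwards [e1, e2] with l hl1 hl2
  have hinj : Function.Injective (fun p : s => ψ p l) := by
    intro p p' h
    by_contra hh
    exact hl2 p p' hh h
  have hsub : Set.range (fun p : s => ψ p l) ⊆ hits m (fun p => G (l, p)) Ω := by
    rintro _ ⟨p, rfl⟩
    exact hl1 p
  refine le_trans ?_ (Set.encard_le_encard hsub)
  rw [← Set.image_univ, hinj.encard_image, Set.encard_univ]
  simp

lemma count_const (hn : n = m + k) (hN : N = (k + 1).choose 2)
    (G : Λ × (Fin N → ℂ) → V n) (hG : ContDiff ℂ 1 G) (l₀ : Λ) {K Ω : Set (Fin N → ℂ)}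
    (hK : IsCompact K) (hΩ : IsOpen Ω) (hΩK : Ω ⊆ K)
    (h : ∀ p ∈ K, (mat (G (l₀, p))).rank ≤ m → p ∈ Ω ∧ NDAt m k (fun p => G (l₀, p)) p) :
    (hits m (fun p => G (l₀, p)) Ω).Finite ∧
    ∀ᶠ l in 𝓝 l₀, (hits m (fun p => G (l, p)) Ω).encard =
      (hits m (fun p => G (l₀, p)) Ω).encard := by
  set T := hits m (fun p => G (l₀, p)) Ω with hT
  have hTK : T = K ∩ (fun p => G (l₀, p)) ⁻¹' {v | (mat v).rank ≤ m} := by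
    ext p
    exact ⟨fun hp => ⟨hΩK hp.1, hp.2⟩, fun hp => ⟨(h p hp.1 hp.2).1, hp.2⟩⟩
  have hcont : Continuous (fun p => G (l₀, p)) := hG.continuous.comp (by fun_prop)
  have hTc : IsCompact T := by
    rw [hTK]
    exact hK.inter_right ((isClosed_rank_le n m).preimage hcont)
  have hper := fun p : T => persist hn hN G hG l₀ p (h p (hΩK p.2.1) p.2.2).2
  choose ψ h1 h2 h3 using hper
  have hself : ∀ p : T, ψ p l₀ = p := fun p => ((h3 p).self_of_nhds p.2.2).symm
  have hfin : T.Finite := by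
    have hU : ∀ p ∈ T, ∃ U ∈ 𝓝 p, U ∩ T ⊆ {p} := by
      intro p hp
      have : ∀ᶠ x in 𝓝 p, (mat (G (l₀, x))).rank ≤ m → x = ψ ⟨p, hp⟩ l₀ :=
        (Continuous.tendsto (f := fun x : Fin N → ℂ => (l₀, x)) (by fun_prop) p).eventually
          (h3 ⟨p, hp⟩)
      refine ⟨_, this, ?_⟩
      rintro x ⟨hx, hxT⟩
      have := hx hxT.2
      rw [hself] at this
      exact this
    choose! U hU1 hU2 using hU
    obtain ⟨t, ht1, ht2⟩ := hTc.elim_nhds_subcover U hU1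
    refine t.finite_toSet.subset fun x hx => ?_
    obtain ⟨y, hy, hxy⟩ := Set.mem_iUnion₂.1 (ht2 hx)
    have := hU2 y (ht1 y hy) ⟨hxy, hx⟩
    rw [Set.mem_singleton_iff.1 this]
    exact hy
  refine ⟨hfin, ?_⟩
  have hup : ∀ᶠ l in 𝓝 l₀, ∀ p ∈ K, (mat (G (l, p))).rank ≤ m → ∃ x : T, p = ψ x l := by
    refine hK.eventually_forall_of_forall_eventually
      (P := fun l p => (mat (G (l, p))).rank ≤ m → ∃ x : T, p = ψ x l) fun p hp => ?_
    by_cases hhit : (mat (G (l₀, p))).rank ≤ m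
    · have hpT : p ∈ T := ⟨(h p hp hhit).1, hhit⟩
      filter_upwards [h3 ⟨p, hpT⟩] with x hx hr
      exact ⟨⟨p, hpT⟩, hx hr⟩
    · have : ∀ᶠ x in 𝓝 (l₀, p), ¬ (mat (G x)).rank ≤ m :=
        hG.continuous.continuousAt.eventually ((isClosed_rank_le n m).isOpen_compl.mem_nhds hhit)
      filter_upwards [this] with x hx hr
      exact absurd hr hx
  have hlow := count_ge hn hN G hG l₀ hΩ hfin.toFinset (fun p hp => by
    have hp : p ∈ T := by simpa using hp
    exact ⟨hp.1, (h p (hΩK hp.1) hp.2).2⟩)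
  filter_upwards [hup, hlow] with l hl1 hl2
  refine le_antisymm ?_ ?_
  · have : hits m (fun p => G (l, p)) Ω ⊆ (fun x : T => ψ x l) '' Set.univ := by
      intro p hp
      obtain ⟨x, hx⟩ := hl1 p (hΩK hp.1) hp.2
      exact ⟨x, trivial, hx.symm⟩
    refine (Set.encard_le_encard this).trans ((Set.encard_image_le _ _).trans ?_)
    rw [Set.encard_univ]
    exact le_of_eq rfl
  · refine le_trans (le_of_eq ?_) hl2
    rw [← Set.encard_coe_eq_coe_finsetCard, hfin.coe_toFinset]
end count

lemma count_path (hn : n = m + k) (hN : N = (k + 1).choose 2)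
    (H : ℂ × (Fin N → ℂ) → V n) (hH : ContDiff ℂ 1 H) {K Ω : Set (Fin N → ℂ)}
    (hK : IsCompact K) (hΩ : IsOpen Ω) (hΩK : Ω ⊆ K)
    (h : ∀ y ∈ Set.Icc (0 : ℝ) 1, ∀ p ∈ K, (mat (H ((y : ℂ), p))).rank ≤ m →
      p ∈ Ω ∧ NDAt m k (fun p => H ((y : ℂ), p)) p) :
    (hits m (fun p => H (0, p)) Ω).encard = (hits m (fun p => H (1, p)) Ω).encard := by
  have := (isPreconnected_Icc (a := (0 : ℝ)) (b := 1)).induction₂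
    (fun a b => (hits m (fun p => H ((a : ℂ), p)) Ω).encard =
      (hits m (fun p => H ((b : ℂ), p)) Ω).encard) ?_ ?_ ?_
      (Set.left_mem_Icc.2 zero_le_one) (Set.right_mem_Icc.2 zero_le_one)
  · simpa using this
  · intro y hy
    have := (count_const hn hN H hH (y : ℂ) hK hΩ hΩK (h y hy)).2
    have h2 : Tendsto (fun y : ℝ => (y : ℂ)) (𝓝[Set.Icc 0 1] y) (𝓝 (y : ℂ)) :=
      (Complex.continuous_ofReal.tendsto y).mono_left nhdsWithin_le_nhds
    filter_upwards [h2.eventually this] with l hl using hl.symm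
  · intro a b c _ _ _ h1 h2
    exact h1.trans h2
  · intro a b _ _ h1
    exact h1.symm

lemma ev_zero (p : Fin N → ℂ) : ev (0 : Par N n) p = 0 := by
  simp [ev]

lemma ev_add (θ θ' : Par N n) (p : Fin N → ℂ) : ev (θ + θ') p = ev θ p + ev θ' p := by
  simp only [ev, Prod.fst_add, Prod.snd_add, Pi.add_apply, smul_add, Finset.sum_add_distrib]
  abel

lemma ev_smul (c : ℂ) (θ : Par N n) (p : Fin N → ℂ) : ev (c • θ) p = c • ev θ p := by
  simp only [ev, Prod.smul_fst, Prod.smul_snd, smul_add, Finset.smul_sum, Pi.smul_apply]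
  congr 1
  refine Finset.sum_congr rfl fun i _ => ?_
  rw [smul_comm]

lemma contDiff_ev {r : WithTop ℕ∞} :
    ContDiff ℂ r (fun x : Par N n × (Fin N → ℂ) => ev x.1 x.2) := by
  unfold ev
  fun_prop

lemma contDiff_ev' {r : WithTop ℕ∞} (θ : Par N n) : ContDiff ℂ r (ev θ) := by
  unfold ev
  fun_prop

lemma fderiv_ev (θ : Par N n) (p e : Fin N → ℂ) :
    fderiv ℂ (ev θ) p e = ∑ i, e i • θ.2 i := by
  have : HasFDerivAt (ev θ) (∑ i, (ContinuousLinearMap.proj (R := ℂ) (φ := fun _ : Fin N => ℂ) i).smulRight (θ.2 i)) p := by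
    unfold ev
    refine HasFDerivAt.const_add _ ?_
    refine HasFDerivAt.fun_sum fun i _ => ?_
    exact (ContinuousLinearMap.hasFDerivAt ((ContinuousLinearMap.proj (R := ℂ) (φ := fun _ : Fin N => ℂ) i).smulRight (θ.2 i)))
  rw [this.fderiv]
  simp

lemma cols_ev (θ : Par N n) (p : Fin N → ℂ) : cols (ev θ) p = θ.2 := by
  ext1 i
  rw [cols, fderiv_ev, Finset.sum_eq_single i]
  · simp
  · intro b _ hb
    simp [hb]
  · simp

lemma cols_add (G G' : (Fin N → ℂ) → V n) (hG : ContDiff ℂ 1 G) (hG' : ContDiff ℂ 1 G')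
    (p : Fin N → ℂ) : cols (fun p => G p + G' p) p = cols G p + cols G' p := by
  ext1 i
  rw [cols, fderiv_fun_add (hG.differentiable one_ne_zero p) (hG'.differentiable one_ne_zero p)]
  rfl

lemma cols_slice {Λ : Type*} [NormedAddCommGroup Λ] [NormedSpace ℂ Λ]
    (H : Λ × (Fin N → ℂ) → V n) (hH : ContDiff ℂ 1 H) (s : Λ) (p : Fin N → ℂ) :
    cols (fun p => H (s, p)) p = fun i => fderiv ℂ H (s, p) (0, Pi.single i 1) := by
  ext1 i
  have : HasFDerivAt (fun p => H (s, p)) ((fderiv ℂ H (s, p)).comp (.inr ℂ Λ _)) p :=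
    (hH.differentiable one_ne_zero (s, p)).hasFDerivAt.comp p (hasFDerivAt_prodMk_right s p)
  rw [cols, this.fderiv]
  rfl

/-- bad affine perturbations along a path -/
def Bad (m k : ℕ) (H : ℂ × (Fin N → ℂ) → V n) : Set (Par N n) :=
  {θ | ∃ (s : ℝ) (p : Fin N → ℂ), (mat (H (s, p) + ev θ p)).rank ≤ m ∧
    ¬ NDAt m k (fun p => H (s, p) + ev θ p) p}

lemma two_finrank_Par_pos (hn : n = m + k) (hN : N = (k + 1).choose 2) (hN0 : 0 < N) :
    2 * N + 2 ≤ 2 * Module.finrank ℂ (Par N n) := by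
  have h1 := finrank_V_pos (N := N) hn hN
  rw [finrank_Par]
  have : N * 1 ≤ N * Module.finrank ℂ (V n) := Nat.mul_le_mul_left _ (by omega)
  omega

lemma dense_bad (hn : n = m + k) (hN : N = (k + 1).choose 2) (hN0 : 0 < N)
    (H : ℂ × (Fin N → ℂ) → V n) (hH : ContDiff ℂ 2 H) : Dense (Bad m k H)ᶜ := by
  have hpos := two_finrank_Par_pos (N := N) hn hN hN0
  have hcov := cov_bad (d := 2 * Module.finrank ℂ (Par N n) - 2 * N - 2) hn hN (by omega)
  have hH1 : ContDiff ℂ 1 H := hH.of_le (by norm_num)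
  let D : ((Fin N → ℂ) × ℝ) → Fin N → V n := fun x i =>
    fderiv ℂ H ((x.2 : ℂ), x.1) (0, Pi.single i 1)
  have hofR : ContDiff ℝ 1 (fun x : (Fin N → ℂ) × ℝ => (((x.2 : ℂ), x.1) : ℂ × (Fin N → ℂ))) :=
    (Complex.ofRealCLM.contDiff.comp contDiff_snd).prodMk contDiff_fst
  have hD : ContDiff ℝ 1 D := by
    refine contDiff_pi.2 fun i => ?_
    have : ContDiff ℂ 1 (fun z => fderiv ℂ H z (0, Pi.single i 1)) :=
      (hH.fderiv_right (m := 1) (by norm_num)).clm_apply contDiff_const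
    exact (this.restrict_scalars ℝ).comp hofR
  have hHH : ContDiff ℝ 1 (fun x : (Fin N → ℂ) × ℝ => H ((x.2 : ℂ), x.1)) :=
    (hH1.restrict_scalars ℝ).comp hofR
  let Fm : ((Fin N → ℂ) × ℝ) × Par N n → Par N n := fun x =>
    (x.2.1 - H ((x.1.2 : ℂ), x.1.1) - ∑ i, x.1.1 i • (x.2.2 i - D x.1 i), x.2.2 - D x.1)
  have hFm : ContDiff ℝ 1 Fm := by
    have hD1 : ContDiff ℝ 1 (fun x : ((Fin N → ℂ) × ℝ) × Par N n => D x.1) := hD.comp contDiff_fst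
    have hH2 : ContDiff ℝ 1 (fun x : ((Fin N → ℂ) × ℝ) × Par N n => H ((x.1.2 : ℂ), x.1.1)) :=
      hHH.comp contDiff_fst
    refine ContDiff.prodMk ?_ ?_
    · refine ContDiff.sub (ContDiff.sub (contDiff_fst.comp contDiff_snd) hH2) ?_
      refine ContDiff.sum fun i _ => ?_
      have : ContDiff ℝ 1 (fun x : ((Fin N → ℂ) × ℝ) × Par N n => D x.1 i) :=
        (contDiff_apply ℝ (V n) i).comp hD1
      have a1 : ContDiff ℝ 1 (fun x : ((Fin N → ℂ) × ℝ) × Par N n => x.1.1 i) := by fun_prop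
      have a2 : ContDiff ℝ 1 (fun x : ((Fin N → ℂ) × ℝ) × Par N n => x.2.2 i) := by fun_prop
      exact a1.smul (a2.sub this)
    · exact ContDiff.sub (contDiff_snd.comp contDiff_snd) hD1
  have hc2 := hcov.image Fm hFm (d' := 2 * Module.finrank ℂ (Par N n) - 1) (by
    rw [Module.finrank_prod, finrank_real_of_complex]
    simp only [Module.finrank_pi, Fintype.card_fin, Module.finrank_self]
    omega)
  refine (hc2.dense_compl ?_).mono ?_
  · rw [finrank_real_of_complex]; omega
  · rw [Set.compl_subset_compl]
    rintro θ ⟨s, p, h1, h2⟩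
    have hsl : ContDiff ℂ 1 (fun p => H ((s : ℂ), p)) := hH1.comp (contDiff_prodMk_right _)
    have hcol : cols (fun p => H (s, p) + ev θ p) p = D (p, s) + θ.2 := by
      rw [cols_add _ _ hsl (contDiff_ev' θ), cols_ev, cols_slice H hH1]
    refine ⟨((p, s), (H (s, p) + ev θ p, D (p, s) + θ.2)), ⟨h1, ?_⟩, ?_⟩
    · rw [NDAt, hcol] at h2
      exact h2
    · simp only [Fm]
      refine Prod.ext ?_ ?_
      · simp [ev]
      · simp

lemma eventually_no_hits (H : ℂ × (Fin N → ℂ) → V n) (hH : Continuous H)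
    {L : Set (Fin N → ℂ)} (hL : IsCompact L)
    (h : ∀ y ∈ Set.Icc (0 : ℝ) 1, ∀ p ∈ L, ¬ (mat (H ((y : ℂ), p))).rank ≤ m) :
    ∀ᶠ θ : Par N n in 𝓝 0, ∀ y ∈ Set.Icc (0 : ℝ) 1, ∀ p ∈ L,
      ¬ (mat (H ((y : ℂ), p) + ev θ p)).rank ≤ m := by
  have := ((isCompact_Icc (a := (0 : ℝ)) (b := 1)).prod hL).eventually_forall_of_forall_eventually
    (x₀ := (0 : Par N n))
    (P := fun θ x => ¬ (mat (H ((x.1 : ℂ), x.2) + ev θ x.2)).rank ≤ m) ?_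
  · filter_upwards [this] with θ hθ y hy p hp
    exact hθ (y, p) ⟨hy, hp⟩
  · rintro ⟨y, p⟩ ⟨hy, hp⟩
    have hc : Continuous (fun x : Par N n × (ℝ × (Fin N → ℂ)) =>
        H ((x.2.1 : ℂ), x.2.2) + ev x.1 x.2.2) := by
      refine Continuous.add (hH.comp (by fun_prop)) ?_
      exact (contDiff_ev (r := 0)).continuous.comp (by fun_prop :
        Continuous fun x : Par N n × (ℝ × (Fin N → ℂ)) => (x.1, x.2.2))
    refine (hc.tendsto (0, (y, p))).eventually
      ((isClosed_rank_le n m).isOpen_compl.mem_nhds ?_)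
    simpa [ev_zero] using h y hy p hp

lemma exchange (hn : n = m + k) (hN : N = (k + 1).choose 2)
    (H : ℂ × (Fin N → ℂ) → V n) (hH : ContDiff ℂ 1 H) {K Ω : Set (Fin N → ℂ)}
    (hK : IsCompact K) (hΩ : IsOpen Ω) (hΩK : Ω ⊆ K)
    (h : ∀ y ∈ Set.Icc (0 : ℝ) 1, ∀ p ∈ K \ Ω, ¬ (mat (H ((y : ℂ), p))).rank ≤ m) :
    ∀ᶠ θ : Par N n in 𝓝 0, θ ∉ Bad m k H →
      (hits m (fun p => H (0, p) + ev θ p) Ω).encard =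
        (hits m (fun p => H (1, p) + ev θ p) Ω).encard := by
  filter_upwards [eventually_no_hits H hH.continuous (hK.diff hΩ) h] with θ hθ hbad
  refine count_path hn hN (fun x => H x + ev θ x.2) (hH.add ((contDiff_ev' θ).comp contDiff_snd))
    hK hΩ hΩK ?_
  intro y hy p hp hr
  refine ⟨?_, ?_⟩
  · by_contra hpΩ
    exact hθ y hy p ⟨hp, hpΩ⟩ hr
  · by_contra hnd
    exact hbad ⟨y, p, hr, hnd⟩

lemma finite_nondeg (hn : n = m + k) (hN : N = (k + 1).choose 2) (hN0 : 0 < N)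
    (G : (Fin N → ℂ) → V n) (hG : ContDiff ℂ 2 G) {K Ω : Set (Fin N → ℂ)}
    (hK : IsCompact K) (hΩ : IsOpen Ω) (hΩK : Ω ⊆ K)
    (h : ∀ p ∈ K \ Ω, ¬ (mat (G p)).rank ≤ m) :
    {p | p ∈ Ω ∧ NDAt m k G p}.Finite := by
  by_contra hinf
  have hG1 : ContDiff ℂ 1 G := hG.of_le (by norm_num)
  have hno := eventually_no_hits (fun x : ℂ × (Fin N → ℂ) => G x.2) (hG.continuous.comp continuous_snd)
    (hK.diff hΩ) (fun y _ p hp => h p hp)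
  obtain ⟨ρ, hρ, hball⟩ := Metric.eventually_nhds_iff_ball.1 hno
  obtain ⟨θ1, hθ1, hbad1⟩ := (dense_bad (m := m) (k := k) hn hN hN0
    (fun x : ℂ × (Fin N → ℂ) => G x.2) (hG.comp contDiff_snd)).inter_open_nonempty
    (Metric.ball 0 ρ) Metric.isOpen_ball ⟨0, Metric.mem_ball_self hρ⟩
  let H : ℂ × (Fin N → ℂ) → V n := fun x => G x.2 + (1 - x.1) • ev θ1 x.2
  have hH : ContDiff ℂ 2 H := by
    refine (hG.comp contDiff_snd).add (ContDiff.smul (contDiff_const.sub contDiff_fst) ((contDiff_ev' θ1).comp contDiff_snd))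
  have hHno : ∀ y ∈ Set.Icc (0 : ℝ) 1, ∀ p ∈ K \ Ω, ¬ (mat (H ((y : ℂ), p))).rank ≤ m := by
    intro y hy p hp
    have hmem : ((1 - (y : ℂ)) • θ1) ∈ Metric.ball (0 : Par N n) ρ := by
      rw [mem_ball_zero_iff] at hθ1 ⊢
      rw [norm_smul]
      have : ‖(1 - (y : ℂ))‖ ≤ 1 := by
        rw [← Complex.ofReal_one, ← Complex.ofReal_sub, Complex.norm_real, Real.norm_eq_abs, abs_le]
        constructor <;> linarith [hy.1, hy.2]
      calc _ ≤ 1 * ‖θ1‖ := by gcongr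
        _ < ρ := by rwa [one_mul]
    have := hball _ hmem y hy p hp
    rwa [ev_smul] at this
  -- count at the generic end
  have hmem1 := hball θ1 hθ1
  obtain ⟨hfin, hconst⟩ := count_const (m := m) (k := k) hn hN
    (fun x : Par N n × (Fin N → ℂ) => (G x.2 + ev θ1 x.2) + ev x.1 x.2)
    (((hG1.comp contDiff_snd).add ((contDiff_ev' θ1).comp contDiff_snd)).add contDiff_ev) 0
    hK hΩ hΩK (by
      intro p hp hr
      simp only [ev_zero, add_zero] at hr ⊢
      refine ⟨?_, ?_⟩
      · by_contra hpΩ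
        exact hmem1 0 ⟨le_rfl, zero_le_one⟩ p ⟨hp, hpΩ⟩ hr
      · by_contra hnd
        exact hbad1 ⟨0, p, hr, hnd⟩)
  obtain ⟨s, hs, hcard⟩ := Set.Infinite.exists_subset_card_eq hinf
    ((hits m (fun p => (G p + ev θ1 p) + ev (0 : Par N n) p) Ω).ncard + 1)
  have hge := count_ge (m := m) (k := k) hn hN
    (fun x : Par N n × (Fin N → ℂ) => G x.2 + ev x.1 x.2)
    ((hG1.comp contDiff_snd).add contDiff_ev) 0 hΩ s (by
      intro p hp
      have := hs hp
      simp only [ev_zero, add_zero]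
      exact this)
  have hex := exchange (m := m) (k := k) hn hN H (hH.of_le (by norm_num)) hK hΩ hΩK hHno
  obtain ⟨θ, hθ, hθb⟩ := (mem_closure_iff_nhds.1 ((dense_bad (m := m) (k := k) hn hN hN0 H hH) 0)) _
    (hconst.and (hge.and hex))
  obtain ⟨a1, a2, a3⟩ := hθ
  have a3 := a3 hθb
  simp only [H, sub_zero, one_smul, sub_self, zero_smul, add_zero] at a3
  rw [← a3, a1, ← hfin.cast_ncard_eq, hcard] at a2
  have : (hits m (fun p => (G p + ev θ1 p) + ev (0 : Par N n) p) Ω).ncard + 1 ≤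
    (hits m (fun p => (G p + ev θ1 p) + ev (0 : Par N n) p) Ω).ncard := by exact_mod_cast a2
  omega

end Smoothing

namespace Smoothing

lemma cov_local {P Q : Type*} [NormedAddCommGroup P] [NormedSpace ℝ P]
    [NormedAddCommGroup Q] [NormedSpace ℝ Q] [FiniteDimensional ℝ Q] {d : ℕ}
    (f : Q → P) (x : Q) (hf : ContDiffAt ℝ 1 f x) (hd : Module.finrank ℝ Q ≤ d) :
    ∃ U ∈ 𝓝 x, Cov d (f '' U) := by
  obtain ⟨ε, hε, hb⟩ := Metric.eventually_nhds_iff_ball.1 (hf.eventually (by simp))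
  let χ : ContDiffBump x := ⟨ε / 4, ε / 2, by positivity, by linarith⟩
  have hg : ContDiff ℝ 1 (fun y => χ y • f y) := by
    refine contDiff_iff_contDiffAt.2 fun y => ?_
    by_cases hy : y ∈ Metric.ball x ε
    · exact (χ.contDiff (n := 1)).contDiffAt.smul (hb y hy)
    · have hy' : y ∉ tsupport χ := by
        rw [χ.tsupport_eq]
        intro hh
        apply hy
        rw [Metric.mem_closedBall] at hh
        rw [Metric.mem_ball]
        have : χ.rOut = ε / 2 := rfl
        linarith
      have h0 : (fun y => χ y • f y) =ᶠ[𝓝 y] fun _ => 0 := by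
        filter_upwards [notMem_tsupport_iff_eventuallyEq.1 hy'] with z hz
        simp [hz]
      exact contDiffAt_const.congr_of_eventuallyEq h0
  refine ⟨Metric.closedBall x (ε / 4), Metric.closedBall_mem_nhds x (by positivity),
    (cov_range _ hg hd).mono ?_⟩
  rintro _ ⟨y, hy, rfl⟩
  exact ⟨y, by simp only; rw [χ.one_of_mem_closedBall hy, one_smul]⟩

variable {q : ℕ}

lemma submanifold_empty {S : Set (EuclideanSpace ℂ (Fin q))} {c : ℕ}
    (hS : IsSubmanifoldOfCodim (EuclideanSpace ℂ (Fin q)) S c) (hc : q < c) : S = ∅ := by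
  rw [Set.eq_empty_iff_forall_notMem]
  intro x hx
  obtain ⟨U, -, -, g, -, -, hs⟩ := hS x hx
  have := LinearMap.finrank_le_finrank_of_surjective (f := (fderiv ℂ g x).toLinearMap) hs
  simp at this
  omega

lemma cov_submanifold {S : Set (EuclideanSpace ℂ (Fin q))} {c : ℕ}
    (hS : IsSubmanifoldOfCodim (EuclideanSpace ℂ (Fin q)) S c) : Cov (2 * (q - c)) S := by
  have key : ∀ x ∈ S, ∃ U ∈ 𝓝[S] x, Cov (2 * (q - c)) U := by
    intro x hx
    obtain ⟨U, hU, hxU, g, hg, hgS, hs⟩ := hS x hx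
    let g' := fderiv ℂ g x
    let Kr := LinearMap.ker g'.toLinearMap
    obtain ⟨π, hπ⟩ := Submodule.exists_isCompl Kr
    let pr : EuclideanSpace ℂ (Fin q) →ₗ[ℂ] Kr := Kr.projectionOnto π hπ
    have hpr : ∀ y : Kr, pr y = y := fun y => Submodule.projectionOnto_apply_left hπ y
    let prc : EuclideanSpace ℂ (Fin q) →L[ℂ] Kr := LinearMap.toContinuousLinearMap pr
    have hgx : ContDiffAt ℂ 1 g x := (hg.contDiffAt (hU.mem_nhds hxU)).of_le le_top
    let f : EuclideanSpace ℂ (Fin q) → EuclideanSpace ℂ (Fin c) × Kr := fun y => (g y, prc y)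
    have hf : ContDiffAt ℂ 1 f x := hgx.prodMk prc.contDiff.contDiffAt
    have hrn : Module.finrank ℂ Kr + c = q := by
      have := g'.toLinearMap.finrank_range_add_finrank_ker
      rw [LinearMap.range_eq_top.2 hs] at this
      simp only [finrank_top, finrank_euclideanSpace, Fintype.card_fin] at this
      have h2 : Module.finrank ℂ Kr = Module.finrank ℂ (LinearMap.ker g'.toLinearMap) := rfl
      omega
    have hinj : Function.Injective (g'.prod prc).toLinearMap := by
      rw [injective_iff_map_eq_zero]
      intro e he
      have h1 : g' e = 0 := congrArg Prod.fst he
      have h2 : pr e = 0 := congrArg Prod.snd he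
      have h3 := hpr ⟨e, h1⟩
      simp only at h3
      rw [h2] at h3
      exact (congrArg Subtype.val h3).symm
    let e := (LinearMap.linearEquivOfInjective _ hinj (by
      rw [Module.finrank_prod]; simp only [finrank_euclideanSpace, Fintype.card_fin]
      omega)).toContinuousLinearEquiv
    have hfd : HasFDerivAt f (e : _ →L[ℂ] _) x := by
      have h1 : HasFDerivAt f (g'.prod prc) x :=
        (hgx.differentiableAt one_ne_zero).hasFDerivAt.prodMk prc.hasFDerivAt
      have h2 : (e : EuclideanSpace ℂ (Fin q) →L[ℂ] EuclideanSpace ℂ (Fin c) × Kr) =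
        g'.prod prc := ContinuousLinearMap.ext fun x => rfl
      rw [h2]; exact h1
    let h := hf.localInverse hfd one_ne_zero
    have hh : ContDiffAt ℂ 1 h (f x) := hf.to_localInverse hfd one_ne_zero
    have hfx : f x = (0, prc x) := by
      simp only [f]; rw [(hgS x hxU).1 hx]
    rw [hfx] at hh
    have hh2 : ContDiffAt ℂ 1 (fun k : Kr => h (0, k)) (prc x) :=
      ContDiffAt.comp (prc x) (g := h) (f := fun k : Kr => ((0 : EuclideanSpace ℂ (Fin c)), k)) hh
        (contDiff_prodMk_right _).contDiffAt
    obtain ⟨B, hB, hcov⟩ := cov_local (d := 2 * (q - c)) _ _ (hh2.restrict_scalars ℝ) (by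
      rw [finrank_real_of_complex]; omega)
    have hleft : ∀ᶠ y in 𝓝 x, h (f y) = y :=
      (hf.hasStrictFDerivAt' hfd one_ne_zero).eventually_left_inverse
    refine ⟨_, ?_, hcov⟩
    have ev1 : ∀ᶠ y in 𝓝 x, prc y ∈ B := prc.continuous.continuousAt.eventually hB
    rw [mem_nhdsWithin_iff_eventually]
    filter_upwards [hleft, ev1, hU.mem_nhds hxU] with y h1 h2 h3 h4
    refine ⟨prc y, h2, ?_⟩
    simp only [f] at h1
    rwa [(hgS y h3).1 h4] at h1
  choose! U hU hc using key
  obtain ⟨t, hts, ht, hcov⟩ := TopologicalSpace.countable_cover_nhdsWithin hU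
  have := ht.to_subtype
  refine (Cov.iUnion fun x : t => hc x (hts x.2)).mono ?_
  rw [Set.biUnion_eq_iUnion] at hcov
  exact hcov

end Smoothing

namespace Smoothing

variable {q n m k N : ℕ}

/-- parametrization of linear slices hitting a given point -/
noncomputable def sliceMap (j : Fin N)
    (x : (ℝ × ({i : Fin N // i ≠ j} → ℂ) × ({i : Fin N // i ≠ j} → EuclideanSpace ℂ (Fin q))) ×
      EuclideanSpace ℂ (Fin q)) : Fin N → EuclideanSpace ℂ (Fin q) :=
  fun i => if h : i = j then
    Complex.exp (-((x.1.1 : ℂ) * Complex.I)) • (x.2 - ∑ i, x.1.2.1 i • x.1.2.2 i)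
    else x.1.2.2 ⟨i, h⟩

lemma contDiff_sliceMap (j : Fin N) : ContDiff ℝ 1 (sliceMap (q := q) j) := by
  refine contDiff_pi.2 fun i => ?_
  by_cases h : i = j
  · simp only [sliceMap, h, dite_true]
    have h1 : ContDiff ℝ 1 (fun x : (ℝ × ({i : Fin N // i ≠ j} → ℂ) ×
        ({i : Fin N // i ≠ j} → EuclideanSpace ℂ (Fin q))) × EuclideanSpace ℂ (Fin q) =>
        Complex.exp (-((x.1.1 : ℂ) * Complex.I))) := by
      refine ContDiff.cexp ?_
      refine ContDiff.neg (ContDiff.mul ?_ contDiff_const)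
      exact Complex.ofRealCLM.contDiff.comp (by fun_prop)
    refine h1.smul (ContDiff.sub contDiff_snd (ContDiff.sum fun l _ => ?_))
    have a1 : ContDiff ℝ 1 (fun x : (ℝ × ({i : Fin N // i ≠ j} → ℂ) ×
        ({i : Fin N // i ≠ j} → EuclideanSpace ℂ (Fin q))) × EuclideanSpace ℂ (Fin q) =>
        x.1.2.1 l) := by fun_prop
    have a2 : ContDiff ℝ 1 (fun x : (ℝ × ({i : Fin N // i ≠ j} → ℂ) ×
        ({i : Fin N // i ≠ j} → EuclideanSpace ℂ (Fin q))) × EuclideanSpace ℂ (Fin q) =>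
        x.1.2.2 l) := by fun_prop
    exact a1.smul a2
  · simp only [sliceMap, h, dite_false]
    fun_prop

lemma dense_slices (hN0 : 0 < N) (hq : N ≤ q) {X : Set (EuclideanSpace ℂ (Fin q))}
    (hX : Cov (2 * (q - N)) X) :
    Dense {J : Fin N → EuclideanSpace ℂ (Fin q) | ∀ p : Fin N → ℂ, (∃ j, ‖p j‖ = 1) →
      ∑ i, p i • J i ∉ X} := by
  have hqN : 0 < N * q := Nat.mul_pos hN0 (by omega)
  have hc : Cov (2 * (N * q) - 1) (⋃ j : Fin N, sliceMap (q := q) j '' {x | x.2 ∈ X}) := by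
    refine Cov.iUnion fun j => hX.image (sliceMap j) (contDiff_sliceMap j) ?_
    have hcard : Fintype.card {i : Fin N // i ≠ j} = N - 1 := by
      rw [Fintype.card_subtype_compl]; simp
    have e1 : Module.finrank ℝ ({i : Fin N // i ≠ j} → ℂ) = 2 * (N - 1) := by
      rw [finrank_real_of_complex, Module.finrank_pi, hcard]
    have e2 : Module.finrank ℝ ({i : Fin N // i ≠ j} → EuclideanSpace ℂ (Fin q)) =
        2 * ((N - 1) * q) := by
      rw [finrank_real_of_complex, Module.finrank_pi_fintype ℂ]
      simp only [finrank_euclideanSpace, Fintype.card_fin, Finset.sum_const, Finset.card_univ,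
        hcard, smul_eq_mul]
    rw [Module.finrank_prod, Module.finrank_prod, e1, e2, Module.finrank_self]
    obtain ⟨M, rfl⟩ : ∃ M, N = M + 1 := ⟨N - 1, by omega⟩
    obtain ⟨t, rfl⟩ : ∃ t, q = M + 1 + t := ⟨q - (M + 1), by omega⟩
    have : (M + 1) * (M + 1 + t) = M * (M + 1 + t) + (M + 1 + t) := by ring
    simp only [Nat.add_sub_cancel, Nat.add_sub_cancel_left, this]
    omega
  refine (hc.dense_compl ?_).mono ?_
  · rw [finrank_real_of_complex, Module.finrank_pi_fintype ℂ]
    simp only [finrank_euclideanSpace, Fintype.card_fin, Finset.sum_const, Finset.card_univ,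
        smul_eq_mul]
    omega
  · intro J hJ p ⟨j, hj⟩ hx
    apply hJ
    refine Set.mem_iUnion.2 ⟨j, ((((p j).arg, fun i => p i, fun i => J i)), ∑ i, p i • J i), hx, ?_⟩
    ext1 i
    by_cases hi : i = j
    · simp only [sliceMap, hi, dite_true]
      have hs : ∑ i, p i • J i = p j • J j + ∑ i : {i // i ≠ j}, p i • J i := by
        classical
        rw [← Finset.add_sum_erase _ _ (Finset.mem_univ j)]
        congr 1
        refine Finset.sum_subtype _ (fun x => by simp) _
      have hp : p j = Complex.exp (((p j).arg : ℂ) * Complex.I) := by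
        have := Complex.norm_mul_exp_arg_mul_I (p j)
        rw [hj] at this
        simpa using this.symm
      rw [hs, add_sub_cancel_right, smul_smul]
      conv_lhs => rw [hp]
      rw [show ((Complex.exp (((p j).arg : ℂ) * Complex.I)).arg) = (p j).arg by rw [← hp]]
      rw [← Complex.exp_add, neg_add_cancel, Complex.exp_zero, one_smul]
    · simp only [sliceMap, hi, dite_false]

/-- arbitrarily small affine perturbations have a nondegenerate hit at `0` -/
lemma exists_nondeg (hn : n = m + k) (hN : N = (k + 1).choose 2)
    (G : (Fin N → ℂ) → V n) (hG : ContDiff ℂ 1 G) (hG0 : G 0 = 0) {O : Set (Par N n)}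
    (hO : O ∈ 𝓝 0) : ∃ θ ∈ O, NDAt m k (fun p => G p + ev θ p) 0 := by
  let σ : Fin m ⊕ Fin k ≃ Fin n := finSumFinEquiv.trans (finCongr hn.symm)
  obtain ⟨A, hA, B, hB, hAB⟩ := mem_nhds_prod_iff.1 hO
  let cc : ℂ → C m k := fun ε => (ε • vec 1, 0)
  have hc : Continuous (fun ε => Phi σ (cc ε)) :=
    (contDiff_Phi σ (i := 0)).continuous.comp (by fun_prop)
  have h0 : Phi σ (cc 0) = 0 := by
    ext s
    simp [Phi, cc, mat_zero, vec]
  have hev : ∀ᶠ ε in 𝓝[≠] (0 : ℂ), Phi σ (cc ε) ∈ A := by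
    refine Filter.Eventually.filter_mono nhdsWithin_le_nhds ?_
    refine hc.continuousAt.eventually ?_
    change A ∈ 𝓝 (Phi σ (cc 0))
    rw [h0]; exact hA
  obtain ⟨ε, hε, hε0⟩ := (hev.and self_mem_nhdsWithin).exists
  have hdense := cov_degL_fixed (N := N) hn hN σ (cc ε)
  obtain ⟨L, hLB, hL⟩ := mem_closure_iff_nhds.1 (hdense (cols G 0)) ((fun L => L - cols G 0) ⁻¹' B) (by
    refine ContinuousAt.preimage_mem_nhds (by fun_prop) ?_
    rw [sub_self]; exact hB)
  refine ⟨(Phi σ (cc ε), L - cols G 0), hAB ⟨hε, hLB⟩, σ, cc ε, ?_, ?_, ?_⟩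
  · simp [hG0, ev]
  · have : mat (cc ε).1 = ε • (1 : Matrix (Fin m) (Fin m) ℂ) := by
      rw [← mat_vec (A := ε • (1 : Matrix (Fin m) (Fin m) ℂ)) (by simp [Matrix.IsSymm])]
      rfl
    rw [this, Matrix.det_smul, Matrix.det_one, mul_one]
    exact (isUnit_iff_ne_zero.2 hε0).pow _
  · have : cols (fun p => G p + ev (Phi σ (cc ε), L - cols G 0) p) 0 = L := by
      rw [cols_add _ _ hG (contDiff_ev' _), cols_ev]
      simp
    rw [this]
    exact hL

lemma forward (hn : n = m + k) (hN : N = (k + 1).choose 2) (hN0 : 0 < N) (hq : N ≤ q)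
    (Ft : EuclideanSpace ℂ (Fin q) × ℂ → V n) (hFt : ContDiff ℂ 2 Ft) (h00 : Ft (0, 0) = 0)
    {X U W : Set (EuclideanSpace ℂ (Fin q))} (hU : U ∈ 𝓝 0) (hX : Cov (2 * (q - N)) X)
    (hXU : ∀ z ∈ U, (mat (Ft (z, 0))).rank ≤ m → z ∈ X) (hW : W ∈ 𝓝 0)
    (hs : ∀ᶠ y in 𝓝[≠] (0 : ℂ), ∀ z ∈ W, ¬ (mat (Ft (z, y))).rank ≤ m) : False := by
  obtain ⟨ε, hε, hball⟩ := Metric.mem_nhds_iff.1 (inter_mem hU hW)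
  obtain ⟨J, hJball, hJ⟩ := (dense_slices hN0 hq hX).inter_open_nonempty
    (Metric.ball 0 (ε / (N + 1))) Metric.isOpen_ball ⟨0, Metric.mem_ball_self (by positivity)⟩
  have hJn : ‖J‖ < ε / (N + 1) := by simpa using hJball
  let Jm : (Fin N → ℂ) → EuclideanSpace ℂ (Fin q) := fun p => ∑ i, p i • J i
  have hJm : ∀ {r : WithTop ℕ∞}, ContDiff ℂ r Jm := by
    intro r
    simp only [Jm]
    fun_prop
  set K := Metric.closedBall (0 : Fin N → ℂ) 1 with hKd
  set Ω := Metric.ball (0 : Fin N → ℂ) 1 with hΩd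
  have hK : IsCompact K := isCompact_closedBall _ _
  have hΩ : IsOpen Ω := Metric.isOpen_ball
  have hΩK : Ω ⊆ K := Metric.ball_subset_closedBall
  have hmap : ∀ p ∈ K, Jm p ∈ U ∩ W := by
    intro p hp
    apply hball
    rw [mem_ball_zero_iff]
    rw [hKd, mem_closedBall_zero_iff] at hp
    calc ‖Jm p‖ ≤ ∑ i, ‖p i • J i‖ := norm_sum_le _ _
      _ ≤ ∑ i : Fin N, ‖J‖ := by
        refine Finset.sum_le_sum fun i _ => ?_
        rw [norm_smul]
        calc _ ≤ 1 * ‖J‖ := by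
              gcongr
              · exact (norm_le_pi_norm p i).trans hp
              · exact norm_le_pi_norm J i
          _ = _ := one_mul _
      _ = N * ‖J‖ := by simp
      _ ≤ (N + 1) * ‖J‖ := by gcongr; linarith
      _ < (N + 1) * (ε / (N + 1)) := by gcongr
      _ = ε := by field_simp
  have hsph : ∀ p ∈ K \ Ω, ¬ (mat (Ft (Jm p, 0))).rank ≤ m := by
    rintro p ⟨hpK, hpΩ⟩ hr
    have hp1 : ‖p‖ = 1 := by
      rw [hKd, mem_closedBall_zero_iff] at hpK
      rw [hΩd, mem_ball_zero_iff] at hpΩ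
      linarith
    have : ∃ j, ‖p j‖ = 1 := by
      by_contra! hne
      have : ‖p‖ < 1 := (pi_norm_lt_iff one_pos).2 fun j =>
        lt_of_le_of_ne (hp1 ▸ norm_le_pi_norm p j) (hne j)
      linarith
    exact hJ p this (hXU _ (hmap p hpK).1 hr)
  have hev1 : ∀ᶠ y in 𝓝 (0 : ℂ), ∀ p ∈ K \ Ω, ¬ (mat (Ft (Jm p, y))).rank ≤ m := by
    refine (hK.diff hΩ).eventually_forall_of_forall_eventually
      (P := fun y p => ¬ (mat (Ft (Jm p, y))).rank ≤ m) fun p hp => ?_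
    have hc : Continuous (fun x : ℂ × (Fin N → ℂ) => Ft (Jm x.2, x.1)) :=
      hFt.continuous.comp (((hJm (r := 0)).continuous.comp continuous_snd).prodMk continuous_fst)
    exact (hc.tendsto (0, p)).eventually
      ((isClosed_rank_le n m).isOpen_compl.mem_nhds (hsph p hp))
  obtain ⟨δ, hδ, hδb⟩ := Metric.eventually_nhds_iff_ball.1 hev1
  obtain ⟨y1, hy1, hy1b⟩ := (hs.and (nhdsWithin_le_nhds (Metric.ball_mem_nhds (0 : ℂ) hδ))).exists
  let H : ℂ × (Fin N → ℂ) → V n := fun x => Ft (Jm x.2, x.1 * y1)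
  have hH : ContDiff ℂ 2 H :=
    hFt.comp ((hJm.comp contDiff_snd).prodMk (contDiff_fst.mul contDiff_const))
  have hHno : ∀ y ∈ Set.Icc (0 : ℝ) 1, ∀ p ∈ K \ Ω, ¬ (mat (H ((y : ℂ), p))).rank ≤ m := by
    intro y hy p hp
    refine hδb _ ?_ p hp
    rw [dist_zero_right] at hy1b
    rw [mem_ball_zero_iff]
    rw [norm_mul, Complex.norm_real, Real.norm_eq_abs, abs_of_nonneg hy.1]
    calc y * ‖y1‖ ≤ 1 * ‖y1‖ := by gcongr; exact hy.2
      _ < δ := by rwa [one_mul]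
  have hex := exchange (m := m) (k := k) hn hN H (hH.of_le (by norm_num)) hK hΩ hΩK hHno
  have hno1 := eventually_no_hits (m := m) (fun x : ℂ × (Fin N → ℂ) => H (1, x.2))
    (hH.continuous.comp (by fun_prop)) hK (by
      intro y _ p hp
      simp only [H, one_mul]
      exact hy1 _ (hmap p hp).2)
  obtain ⟨O, hOsub, hOo, h0O⟩ := eventually_nhds_iff.1 (hex.and hno1)
  have hG : ContDiff ℂ 1 (fun p => H (0, p)) :=
    (hH.of_le (by norm_num : (1 : WithTop ℕ∞) ≤ 2)).comp (contDiff_prodMk_right _)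
  obtain ⟨θ0, hθ0, hnd⟩ := exists_nondeg (m := m) (k := k) hn hN (fun p => H (0, p)) hG
    (by simp [H, Jm, h00]) (hOo.mem_nhds h0O)
  have hge := count_ge (m := m) (k := k) hn hN
    (fun x : Par N n × (Fin N → ℂ) => H (0, x.2) + ev x.1 x.2)
    ((hG.comp contDiff_snd).add contDiff_ev) θ0 hΩ {0} (by
      intro p hp
      rw [Finset.mem_singleton] at hp
      subst hp
      exact ⟨Metric.mem_ball_self one_pos, hnd⟩)
  obtain ⟨θ, ⟨hθ1, hθ2⟩, hθb⟩ := mem_closure_iff_nhds.1 (dense_bad (m := m) (k := k) hn hN hN0 H hH θ0) _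
    (inter_mem hge (hOo.mem_nhds hθ0))
  obtain ⟨b1, b2⟩ := hOsub θ hθ2
  have b1 := b1 hθb
  have hemp : hits m (fun p => H (1, p) + ev θ p) Ω = ∅ := by
    rw [Set.eq_empty_iff_forall_notMem]
    rintro p ⟨hp, hr⟩
    exact b2 0 ⟨le_rfl, zero_le_one⟩ p (hΩK hp) hr
  rw [hemp, Set.encard_empty] at b1
  have hθ1 : ((({0} : Finset (Fin N → ℂ)).card : ℕ) : ℕ∞) ≤
    (hits m (fun p => H (0, p) + ev θ p) Ω).encard := hθ1
  rw [b1] at hθ1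
  simp at hθ1

end Smoothing

namespace Smoothing

variable {q n m k N : ℕ}

lemma backward_easy (hn : n = m + k) (hN : N = (k + 1).choose 2) (hq : q + 1 < N)
    (F : EuclideanSpace ℂ (Fin q) → V n) (hF : ContDiff ℂ ⊤ F) :
    ∃ Ft : EuclideanSpace ℂ (Fin q) × ℂ → V n, ContDiff ℂ ⊤ Ft ∧ (∀ z, Ft (z, 0) = F z) ∧
      ∃ W ∈ 𝓝 (0 : EuclideanSpace ℂ (Fin q)), ∀ᶠ y in 𝓝[≠] (0 : ℂ), ∀ z ∈ W,
        ¬ (mat (Ft (z, y))).rank ≤ m := by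
  have h1 := finrank_V_pos (N := N) hn hN
  let Fm : (EuclideanSpace ℂ (Fin q) × ℂ) × V n → V n := fun x =>
    Complex.exp (-x.1.2) • (x.2 - F x.1.1)
  have hFm : ContDiff ℂ 1 Fm := by
    have a1 : ContDiff ℂ 1 (fun x : (EuclideanSpace ℂ (Fin q) × ℂ) × V n => F x.1.1) :=
      (hF.of_le le_top).comp (contDiff_fst.comp contDiff_fst)
    have a2 : ContDiff ℂ 1 (fun x : (EuclideanSpace ℂ (Fin q) × ℂ) × V n =>
        Complex.exp (-x.1.2)) := by fun_prop
    exact a2.smul (contDiff_snd.sub a1)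
  have hc := (cov_hits hn).image Fm (hFm.restrict_scalars ℝ)
    (d' := 2 * Module.finrank ℂ (V n) - 1) (by
      rw [finrank_real_of_complex, Module.finrank_prod]
      simp only [finrank_euclideanSpace, Fintype.card_fin, Module.finrank_self]
      omega)
  have hd := hc.dense_compl (by rw [finrank_real_of_complex]; omega)
  obtain ⟨A, hA⟩ := hd.nonempty
  refine ⟨fun x => F x.1 + x.2 • A, ?_, by simp, Set.univ, univ_mem, ?_⟩
  · exact (hF.comp contDiff_fst).add (contDiff_snd.smul contDiff_const)
  · filter_upwards [self_mem_nhdsWithin] with y hy z _ hr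
    apply hA
    refine ⟨((z, Complex.log y), F z + y • A), hr, ?_⟩
    have hy0 : y ≠ 0 := hy
    simp only [Fm, add_sub_cancel_left, smul_smul, Complex.exp_neg, Complex.exp_log hy0,
      inv_mul_cancel₀ hy0, one_smul]

/-- last coordinates -/
noncomputable def tl (p : Fin (q + 1) → ℂ) : EuclideanSpace ℂ (Fin q) :=
  WithLp.toLp 2 (fun i => p i.succ)

/-- insert a first coordinate -/
noncomputable def cs (x : EuclideanSpace ℂ (Fin q) × ℂ) : Fin (q + 1) → ℂ :=
  Fin.cons x.2 (fun i => x.1 i)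

lemma tl_cs (x : EuclideanSpace ℂ (Fin q) × ℂ) : tl (cs x) = x.1 := by
  ext i
  simp [tl, cs]

lemma cs_zero (x : EuclideanSpace ℂ (Fin q) × ℂ) : cs x 0 = x.2 := by
  simp [cs]

lemma cs_tl (p : Fin (q + 1) → ℂ) : cs (tl p, p 0) = p := by
  ext i
  refine Fin.cases ?_ (fun i => ?_) i
  · simp [cs]
  · simp [cs, tl]

lemma contDiff_tl {r : WithTop ℕ∞} : ContDiff ℂ r (tl (q := q)) := by
  refine (contDiff_euclidean (𝕜 := ℂ)).2 fun i => ?_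
  simp only [tl]
  fun_prop

lemma contDiff_cs {r : WithTop ℕ∞} : ContDiff ℂ r (cs (q := q)) := by
  refine contDiff_pi.2 fun i => ?_
  refine Fin.cases ?_ (fun i => ?_) i
  · simp only [cs, Fin.cons_zero]
    fun_prop
  · simp only [cs, Fin.cons_succ]
    fun_prop

/-- the family to be made generic -/
noncomputable def Gf (F : EuclideanSpace ℂ (Fin q) → V n) (θ : Par (q + 1) n)
    (p : Fin (q + 1) → ℂ) : V n := F (tl p) + p 0 • ev θ p

lemma contDiff_Gf {r : WithTop ℕ∞} (F : EuclideanSpace ℂ (Fin q) → V n) (hF : ContDiff ℂ r F)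
    (θ : Par (q + 1) n) : ContDiff ℂ r (Gf F θ) := by
  have h1 : ContDiff ℂ r (fun p : Fin (q + 1) → ℂ => p 0) := contDiff_apply ℂ ℂ 0
  exact (hF.comp contDiff_tl).add (h1.smul (contDiff_ev' θ))

lemma cols_Gf (F : EuclideanSpace ℂ (Fin q) → V n) (hF : ContDiff ℂ 1 F)
    (θ : Par (q + 1) n) (p : Fin (q + 1) → ℂ) (i : Fin (q + 1)) :
    cols (Gf F θ) p i = cols (fun p => F (tl p)) p i + p 0 • θ.2 i +
      (if i = 0 then (1 : ℂ) else 0) • ev θ p := by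
  have h1 : ContDiff ℂ 1 (fun p : Fin (q + 1) → ℂ => p 0) := contDiff_apply ℂ ℂ 0
  have h2 : HasFDerivAt (fun p : Fin (q + 1) → ℂ => p 0)
      (ContinuousLinearMap.proj (R := ℂ) (φ := fun _ : Fin (q + 1) => ℂ) 0) p :=
    (ContinuousLinearMap.proj (R := ℂ) (φ := fun _ : Fin (q + 1) => ℂ) 0).hasFDerivAt
  have h3 := h2.fun_smul (((contDiff_ev' (r := 1) θ).differentiable one_ne_zero p).hasFDerivAt)
  have h4 := congrFun (cols_add _ _ (hF.comp contDiff_tl) (h1.smul (contDiff_ev' θ)) p) i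
  have h5 : cols (fun p : Fin (q + 1) → ℂ => p 0 • ev θ p) p i =
      p 0 • θ.2 i + (if i = 0 then (1 : ℂ) else 0) • ev θ p := by
    rw [cols, h3.fderiv]
    have h6 := congrFun (cols_ev θ p) i
    rw [cols] at h6
    simp [h6, Pi.single_apply, eq_comm]
  rw [add_assoc, ← h5]
  exact h4

lemma dense_Gf (hn : n = m + k) (hN : q + 1 = (k + 1).choose 2)
    (F : EuclideanSpace ℂ (Fin q) → V n) (hF : ContDiff ℂ 2 F) :
    Dense {θ : Par (q + 1) n | ∀ p, p 0 ≠ 0 → (mat (Gf F θ p)).rank ≤ m → NDAt m k (Gf F θ) p} := by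
  have hpos := two_finrank_Par_pos (N := q + 1) hn hN (by omega)
  have hcov := cov_bad (d := 2 * Module.finrank ℂ (Par (q + 1) n) - 2 * (q + 1) - 2) hn hN (by omega)
  let Fh : (Fin (q + 1) → ℂ) → V n := fun p => F (tl p)
  have hFh : ContDiff ℂ 2 Fh := hF.comp contDiff_tl
  let pp : (Fin (q + 1) → ℂ) → Fin (q + 1) → ℂ := fun w => Function.update w 0 (Complex.exp (w 0))
  have hpp : ContDiff ℂ 1 pp := by
    refine contDiff_pi.2 fun i => ?_
    by_cases hi : i = 0
    · subst hi
      simp only [pp, Function.update_self]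
      fun_prop
    · simp only [pp, Function.update_of_ne hi]
      fun_prop
  let D : (Fin (q + 1) → ℂ) → Fin (q + 1) → V n := fun w => cols Fh (pp w)
  have hD : ContDiff ℂ 1 D := by
    refine contDiff_pi.2 fun i => ?_
    have : ContDiff ℂ 1 (fun z => fderiv ℂ Fh z (Pi.single i 1)) :=
      (hFh.fderiv_right (m := 1) (by norm_num)).clm_apply contDiff_const
    exact this.comp hpp
  let u : (Fin (q + 1) → ℂ) × Par (q + 1) n → V n := fun x => Complex.exp (-x.1 0) • (x.2.1 - Fh (pp x.1))
  let ℓ : (Fin (q + 1) → ℂ) × Par (q + 1) n → Fin (q + 1) → V n := fun x i =>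
    Complex.exp (-x.1 0) • (x.2.2 i - D x.1 i - (if i = 0 then (1 : ℂ) else 0) • u x)
  let Fm : (Fin (q + 1) → ℂ) × Par (q + 1) n → Par (q + 1) n := fun x => (u x - ∑ i, pp x.1 i • ℓ x i, ℓ x)
  have he : ContDiff ℂ 1 (fun x : (Fin (q + 1) → ℂ) × Par (q + 1) n => Complex.exp (-x.1 0)) := by fun_prop
  have hu : ContDiff ℂ 1 u := by
    have a1 : ContDiff ℂ 1 (fun x : (Fin (q + 1) → ℂ) × Par (q + 1) n => Fh (pp x.1)) :=
      (hFh.of_le (by norm_num)).comp (hpp.comp contDiff_fst)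
    exact he.smul ((contDiff_fst.comp contDiff_snd).sub a1)
  have hl : ∀ i, ContDiff ℂ 1 (fun x : (Fin (q + 1) → ℂ) × Par (q + 1) n => ℓ x i) := by
    intro i
    have a1 : ContDiff ℂ 1 (fun x : (Fin (q + 1) → ℂ) × Par (q + 1) n => D x.1 i) :=
      (contDiff_apply ℂ (V n) i).comp (hD.comp contDiff_fst)
    have a2 : ContDiff ℂ 1 (fun x : (Fin (q + 1) → ℂ) × Par (q + 1) n => x.2.2 i) :=
      (contDiff_apply ℂ (V n) i).comp (contDiff_snd.comp contDiff_snd)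
    have a3 : ContDiff ℂ 1 (fun x : (Fin (q + 1) → ℂ) × Par (q + 1) n => (if i = 0 then (1 : ℂ) else 0) • u x) :=
      hu.const_smul _
    exact he.smul ((a2.sub a1).sub a3)
  have hFm : ContDiff ℂ 1 Fm := by
    refine ContDiff.prodMk (hu.sub (ContDiff.sum fun i _ => ?_)) (contDiff_pi.2 hl)
    have a1 : ContDiff ℂ 1 (fun x : (Fin (q + 1) → ℂ) × Par (q + 1) n => pp x.1 i) :=
      (contDiff_apply ℂ ℂ i).comp (hpp.comp contDiff_fst)
    exact a1.smul (hl i)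
  have hc2 := hcov.image Fm (hFm.restrict_scalars ℝ)
    (d' := 2 * Module.finrank ℂ (Par (q + 1) n) - 1) (by
    rw [finrank_real_of_complex]
    simp only [Module.finrank_pi, Fintype.card_fin]
    omega)
  refine (hc2.dense_compl ?_).mono ?_
  · rw [finrank_real_of_complex]; omega
  · intro θ hθ p hp hr
    by_contra hnd
    apply hθ
    let w : Fin (q + 1) → ℂ := Function.update p 0 (Complex.log (p 0))
    have hw0 : w 0 = Complex.log (p 0) := by simp [w]
    have hexp : Complex.exp (-w 0) = (p 0)⁻¹ := by rw [hw0, Complex.exp_neg, Complex.exp_log hp]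
    have hppw : pp w = p := by
      ext i
      by_cases hi : i = 0
      · subst hi
        simp [pp, hw0, Complex.exp_log hp]
      · simp [pp, w, Function.update_of_ne hi]
    have hu' : u (w, (Gf F θ p, cols (Gf F θ) p)) = ev θ p := by
      simp only [u, hexp, hppw, Fh, Gf, add_sub_cancel_left, smul_smul, inv_mul_cancel₀ hp, one_smul]
    have hl' : ℓ (w, (Gf F θ p, cols (Gf F θ) p)) = θ.2 := by
      ext1 i
      simp only [ℓ, hu']
      rw [cols_Gf F (hF.of_le (by norm_num))]
      simp only [hexp, D, hppw, Fh]
      have key : ∀ A B X : V n, A + B + X - A - X = B := fun A B X => by abel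
      rw [key, smul_smul, inv_mul_cancel₀ hp, one_smul]
    refine ⟨(w, (Gf F θ p, cols (Gf F θ) p)), ⟨hr, hnd⟩, ?_⟩
    refine Prod.ext ?_ hl'
    simp only [Fm, hl', hu', hppw, ev]
    simp

lemma countable_hits (hn : n = m + k) (hN : N = (k + 1).choose 2) (G : (Fin N → ℂ) → V n)
    (hG : ContDiff ℂ 1 G) (T : Set (Fin N → ℂ))
    (hT : ∀ p ∈ T, (mat (G p)).rank ≤ m ∧ NDAt m k G p) : T.Countable := by
  have hnb : ∀ p ∈ T, {p} ∈ 𝓝[T] p := by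
    intro p hp
    obtain ⟨ψ, -, -, h3⟩ := persist hn hN (fun x : ℂ × (Fin N → ℂ) => G x.2)
      (hG.comp contDiff_snd) 0 p (hT p hp).2
    have h4 : ∀ᶠ x in 𝓝 p, (mat (G x)).rank ≤ m → x = ψ 0 :=
      (Continuous.tendsto (f := fun x : Fin N → ℂ => ((0 : ℂ), x)) (by fun_prop) p).eventually h3
    have h5 : p = ψ 0 := h4.self_of_nhds (hT p hp).1
    rw [mem_nhdsWithin_iff_eventually]
    filter_upwards [h4] with x hx hxT
    rw [Set.mem_singleton_iff, h5]
    exact hx (hT x hxT).1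
  obtain ⟨t, -, ht, hcov⟩ := TopologicalSpace.countable_cover_nhdsWithin hnb
  refine ht.mono fun x hx => ?_
  obtain ⟨y, hy, hxy⟩ := Set.mem_iUnion₂.1 (hcov hx)
  rw [Set.mem_singleton_iff.1 hxy]
  exact hy

lemma backward_hard (hn : n = m + k) (hN : q + 1 = (k + 1).choose 2)
    (F : EuclideanSpace ℂ (Fin q) → V n) (hF : ContDiff ℂ ⊤ F)
    {U : Set (EuclideanSpace ℂ (Fin q))} (hU : U ∈ 𝓝 0)
    (hUF : ∀ z ∈ U, z ≠ 0 → ¬ (mat (F z)).rank ≤ m) :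
    ∃ Ft : EuclideanSpace ℂ (Fin q) × ℂ → V n, ContDiff ℂ ⊤ Ft ∧ (∀ z, Ft (z, 0) = F z) ∧
      ∃ W ∈ 𝓝 (0 : EuclideanSpace ℂ (Fin q)), ∀ᶠ y in 𝓝[≠] (0 : ℂ), ∀ z ∈ W,
        ¬ (mat (Ft (z, y))).rank ≤ m := by
  have hF2 : ContDiff ℂ 2 F := hF.of_le le_top
  obtain ⟨θ, hθ⟩ := (dense_Gf hn hN F hF2).nonempty
  have hGc : ContDiff ℂ 2 (Gf F θ) := contDiff_Gf F hF2 θ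
  obtain ⟨ε, hε, hball⟩ := Metric.nhds_basis_closedBall.mem_iff.1 hU
  refine ⟨fun x => Gf F θ (cs x), (contDiff_Gf F hF θ).comp contDiff_cs, ?_,
    Metric.ball 0 ε, Metric.ball_mem_nhds _ hε, ?_⟩
  · intro z
    simp [Gf, tl_cs, cs_zero]
  have hsph : ∀ᶠ y in 𝓝 (0 : ℂ), ∀ z ∈ Metric.sphere (0 : EuclideanSpace ℂ (Fin q)) ε,
      ¬ (mat (Gf F θ (cs (z, y)))).rank ≤ m := by
    refine (isCompact_sphere _ _).eventually_forall_of_forall_eventually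
      (P := fun y z => ¬ (mat (Gf F θ (cs (z, y)))).rank ≤ m) fun z hz => ?_
    have hc : Continuous (fun x : ℂ × EuclideanSpace ℂ (Fin q) => Gf F θ (cs (x.2, x.1))) :=
      hGc.continuous.comp ((contDiff_cs (r := 0)).continuous.comp (by fun_prop))
    refine (hc.tendsto (0, z)).eventually ((isClosed_rank_le n m).isOpen_compl.mem_nhds ?_)
    have : Gf F θ (cs (z, 0)) = F z := by simp [Gf, tl_cs, cs_zero]
    simp only [this]
    refine hUF z (hball (Metric.sphere_subset_closedBall hz)) ?_
    rintro rfl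
    simp at hz
    exact hε.ne hz
  obtain ⟨δ0, hδ0, hball0⟩ := Metric.eventually_nhds_iff_ball.1 hsph
  have hcount := countable_hits hn hN (Gf F θ) (hGc.of_le (by norm_num))
    {p | p 0 ≠ 0 ∧ (mat (Gf F θ p)).rank ≤ m} (fun p hp => ⟨hp.2, hθ p hp.1 hp.2⟩)
  have hcount2 := hcount.image (fun p : Fin (q + 1) → ℂ => ‖p 0‖)
  obtain ⟨δ, hδ, hδn⟩ : ∃ δ ∈ Set.Ioo 0 δ0, δ ∉ (fun p : Fin (q + 1) → ℂ => ‖p 0‖) ''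
      {p | p 0 ≠ 0 ∧ (mat (Gf F θ p)).rank ≤ m} := by
    by_contra! hh
    have hunc : ¬ (Set.Ioo 0 δ0).Countable := by
      rw [← Cardinal.le_aleph0_iff_set_countable, Cardinal.mk_Ioo_real hδ0, not_le]
      exact Cardinal.aleph0_lt_continuum
    exact hunc (hcount2.mono hh)
  set K : Set (Fin (q + 1) → ℂ) := {p | ‖p 0‖ ≤ δ ∧ ‖tl p‖ ≤ ε} with hKd
  set Ω : Set (Fin (q + 1) → ℂ) := {p | ‖p 0‖ < δ ∧ ‖tl p‖ < ε} with hΩd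
  have htlc : Continuous (tl (q := q)) := (contDiff_tl (r := 0)).continuous
  have h0c : Continuous (fun p : Fin (q + 1) → ℂ => p 0) := continuous_apply 0
  have hK : IsCompact K := by
    refine (isCompact_closedBall (0 : Fin (q + 1) → ℂ) (max δ ε)).of_isClosed_subset ?_ ?_
    · exact (isClosed_le h0c.norm continuous_const).inter (isClosed_le htlc.norm continuous_const)
    · rintro p ⟨h1, h2⟩
      rw [mem_closedBall_zero_iff, pi_norm_le_iff_of_nonneg (le_max_of_le_right hε.le)]
      refine Fin.cases ?_ fun i => ?_
      · exact h1.trans (le_max_left _ _)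
      · exact ((PiLp.norm_apply_le (tl p) i).trans h2).trans (le_max_right _ _)
  have hΩ : IsOpen Ω :=
    (isOpen_lt h0c.norm continuous_const).inter (isOpen_lt htlc.norm continuous_const)
  have hΩK : Ω ⊆ K := fun p hp => ⟨hp.1.le, hp.2.le⟩
  have hfin := finite_nondeg hn hN (by omega) (Gf F θ) hGc hK hΩ hΩK (by
    rintro p ⟨⟨h1, h2⟩, h3⟩ hr
    by_cases h4 : ‖tl p‖ = ε
    · have := hball0 (p 0) (by rw [mem_ball_zero_iff]; exact h1.trans_lt hδ.2) (tl p) (by simpa using h4)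
      rw [cs_tl] at this
      exact this hr
    · have h5 : ‖p 0‖ = δ := by
        by_contra h6
        exact h3 ⟨lt_of_le_of_ne h1 h6, lt_of_le_of_ne h2 h4⟩
      refine hδn ⟨p, ⟨?_, hr⟩, h5⟩
      rw [← norm_pos_iff, h5]
      exact hδ.1)
  have hfin2 : ((fun p : Fin (q + 1) → ℂ => p 0) ''
      {p | p ∈ Ω ∧ NDAt m k (Gf F θ) p} \ {0}).Finite :=
    (hfin.image _).subset Set.sdiff_subset
  have hev : ∀ᶠ y in 𝓝 (0 : ℂ), y ∉ (fun p : Fin (q + 1) → ℂ => p 0) ''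
      {p | p ∈ Ω ∧ NDAt m k (Gf F θ) p} \ {0} :=
    hfin2.isClosed.isOpen_compl.mem_nhds (by simp)
  have hevb : ∀ᶠ y in 𝓝 (0 : ℂ), y ∈ Metric.ball (0 : ℂ) δ := Metric.ball_mem_nhds _ hδ.1
  filter_upwards [nhdsWithin_le_nhds hev, nhdsWithin_le_nhds hevb, self_mem_nhdsWithin] with y h1 h2 h3 z hz hr
  have h3 : y ≠ 0 := h3
  refine h1 ⟨⟨cs (z, y), ⟨⟨?_, ?_⟩, ?_⟩, cs_zero _⟩, h3⟩
  · rw [cs_zero]; simpa using h2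
  · rw [tl_cs]; simpa using hz
  · exact hθ _ (by rw [cs_zero]; exact h3) hr

end Smoothing

/-- With the expected-codimension hypothesis (each rank stratum of the SEIDS
`X = F⁻¹(S_r)` has the expected codimension `(n-i)(n-i+1)/2` off the origin), the germ
`(X,0)` admits a smoothing — a holomorphic symmetric deformation `F̃` of `F` whose
fibers over generic nearby parameters `y ≠ 0` avoid `S_{r-1}`, i.e. the perturbed
fiber maps have empty preimage of `S_{r-1}` near the origin — if and only if
`q < (n-r+1)(n-r+2)/2`. -/
theorem has_smoothing_iff_dimension_bound
    (q n r : ℕ) (hr1 : 1 ≤ r) (hrn : r ≤ n)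
    (F : EuclideanSpace ℂ (Fin q) → Matrix (Fin n) (Fin n) ℂ)
    (hol : ∀ i j, ContDiff ℂ ⊤ fun z => F z i j)
    (hsymm : ∀ z, (F z).IsSymm) (hF0 : F 0 = 0)
    (hcodim : ∀ i ≤ n, ∃ U ∈ 𝓝 (0 : EuclideanSpace ℂ (Fin q)),
      IsSubmanifoldOfCodim (EuclideanSpace ℂ (Fin q))
        {z | z ∈ U \ {0} ∧ (F z).rank = i} ((n - i) * (n - i + 1) / 2)) :
    (∃ Ft : EuclideanSpace ℂ (Fin q) × ℂ → Matrix (Fin n) (Fin n) ℂ,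
        (∀ i j, ContDiff ℂ ⊤ fun p => Ft p i j) ∧
        (∀ p, (Ft p).IsSymm) ∧
        (∀ z, Ft (z, 0) = F z) ∧
        ∃ W ∈ 𝓝 (0 : EuclideanSpace ℂ (Fin q)),
          ∀ᶠ y in 𝓝[≠] (0 : ℂ), ∀ z ∈ W, ¬ (Ft (z, y)).rank ≤ r - 1) ↔
      q < (n - r + 1) * (n - r + 2) / 2 := by
  classical
  obtain ⟨m, rfl⟩ : ∃ m, r = m + 1 := ⟨r - 1, by omega⟩
  obtain ⟨k, hn⟩ : ∃ k, n = m + k := ⟨n - m, by omega⟩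
  have hk : 1 ≤ k := by omega
  have hNk : (n - (m + 1) + 1) * (n - (m + 1) + 2) / 2 = (k + 1).choose 2 := by
    have e1 : n - (m + 1) + 1 = k := by omega
    have e2 : n - (m + 1) + 2 = k + 1 := by omega
    rw [e1, e2, Nat.choose_two_right, Nat.add_sub_cancel, mul_comm]
  have hN0 : 0 < (k + 1).choose 2 := Nat.choose_pos (by omega)
  have hci : ∀ i ≤ m, (k + 1).choose 2 ≤ (n - i) * (n - i + 1) / 2 := by
    intro i hi
    rw [Nat.choose_two_right, Nat.add_sub_cancel, mul_comm]
    exact Nat.div_le_div_right (Nat.mul_le_mul (by omega) (by omega))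
  rw [hNk, Nat.add_sub_cancel]
  choose! Us hUs hSub using hcodim
  have hU : (⋂ i ∈ Finset.range (n + 1), Us i) ∈ 𝓝 (0 : EuclideanSpace ℂ (Fin q)) :=
    (Filter.biInter_finset_mem _).2 fun i hi => hUs i (by have := Finset.mem_range.1 hi; omega)
  have hUi : ∀ z ∈ (⋂ i ∈ Finset.range (n + 1), Us i), ∀ i ≤ m, z ∈ Us i := by
    intro z hz i hi
    exact Set.mem_iInter₂.1 hz i (Finset.mem_range.2 (by omega))
  constructor
  · rintro ⟨Ft, hFt, hFs, hFF, W, hW, hs⟩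
    by_contra! hq
    refine Smoothing.forward (m := m) (k := k) (X := {0} ∪ ⋃ i : Fin (m + 1),
        {z | z ∈ Us i \ {0} ∧ (F z).rank = i}) hn rfl hN0 hq
      (fun p => Smoothing.vec (Ft p)) ?_ ?_ hU ?_ ?_ hW ?_
    · exact contDiff_pi.2 fun s => (hFt _ _).of_le le_top
    · simp only [hFF, hF0]
      rfl
    · refine Smoothing.Cov.union ?_ (Smoothing.Cov.iUnion fun i => ?_)
      · refine (Smoothing.cov_range (Q := Fin 0 → ℝ) (fun _ => 0) contDiff_const (by simp)).mono ?_
        intro z hz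
        exact ⟨0, (Set.mem_singleton_iff.1 hz).symm⟩
      · refine (Smoothing.cov_submanifold (hSub i (by omega))).mono_dim ?_
        have := hci i (by omega)
        omega
    · intro z hz hr
      rw [Smoothing.mat_vec (hFs _), hFF] at hr
      by_cases h0 : z = 0
      · exact Or.inl h0
      · refine Or.inr (Set.mem_iUnion.2 ⟨⟨(F z).rank, by omega⟩, ⟨hUi z hz _ hr, h0⟩, rfl⟩)
    · simpa only [Smoothing.mat_vec (hFs _)] using hs
  · intro hq
    have hUF : ∀ z ∈ (⋂ i ∈ Finset.range (n + 1), Us i), z ≠ 0 →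
        ¬ (Smoothing.mat (Smoothing.vec (F z))).rank ≤ m := by
      intro z hz h0 hr
      rw [Smoothing.mat_vec (hsymm _)] at hr
      have he := Smoothing.submanifold_empty (hSub (F z).rank (by omega))
        (lt_of_lt_of_le hq (hci _ hr))
      have hmem : z ∈ {w | w ∈ Us (F z).rank \ {0} ∧ (F w).rank = (F z).rank} :=
        ⟨⟨hUi z hz _ hr, h0⟩, rfl⟩
      rw [he] at hmem
      exact hmem
    have hFv : ContDiff ℂ ⊤ (fun z => Smoothing.vec (F z)) := contDiff_pi.2 fun s => hol _ _
    have hmain : ∃ Ft : EuclideanSpace ℂ (Fin q) × ℂ → Smoothing.V n,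
        ContDiff ℂ ⊤ Ft ∧ (∀ z, Ft (z, 0) = Smoothing.vec (F z)) ∧
        ∃ W ∈ 𝓝 (0 : EuclideanSpace ℂ (Fin q)), ∀ᶠ y in 𝓝[≠] (0 : ℂ), ∀ z ∈ W,
          ¬ (Smoothing.mat (Ft (z, y))).rank ≤ m := by
      rcases Nat.lt_or_eq_of_le (Nat.succ_le_of_lt hq) with h | h
      · exact Smoothing.backward_easy hn rfl h _ hFv
      · exact Smoothing.backward_hard hn h _ hFv hU hUF
    obtain ⟨Ft, h1, h2, W, hW, h3⟩ := hmain
    refine ⟨fun p => Smoothing.mat (Ft p), fun i j => ?_, fun p => Smoothing.mat_symm _,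
      fun z => ?_, W, hW, h3⟩
    · exact contDiff_pi.1 h1 s(i, j)
    · simp only [h2, Smoothing.mat_vec (hsymm _)]
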